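/- arXiv:2604.01046 — 5 statements merged into one kernel-verified Lean document; each statement's English description precedes it below -/
import Mathlib

section
/- Let Y be a real Banach space, T̄ > 0, and let φ be a process on Y that is T̄-periodic in time. If X⁰ ⊆ Y is a nonempty, compact and convex set such that φ(T̄, 0, x) ∈ X⁰ for every x ∈ X⁰, then there exists a global periodic solution x : ℝ → Y with period T̄; that is, x(t + T̄) = x(t) for every t ∈ ℝ, and φ(t, t₀, x(t₀)) = x(t) for every t₀ ∈ ℝ and every t ≥ t₀. -/
/-!
The orbit through a fixed point of the period map `φ T 0` is periodic, and Schauder's theorem gives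
a fixed point on `X`. Schauder's theorem reduces to Brouwer's on the simplex of weights of a finite
`ε`-net, and Brouwer's, by a Hilbert space retraction and smoothing, to the existence of a zero of
`x + f x` for `f` of class `C¹` with compact support.

For such a zero, let `s` be a compact set containing the support of `f`, and consider
`∫ x in s, w (x + f x) * det (1 + Df x) = ∫ x in s, w x`. With `t • f` in place of `f` and small
`t > 0` it is the change of variables formula for a bijection of `s` onto itself. If `w` is a
polynomial, both sides are polynomials in `t`, so it holds at `t = 1` as well, and by the
Stone–Weierstrass theorem it then holds for all continuous `w`. If `x + f x` had no zero, a bump `w`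
around `0` would make the left side vanish but not the right side.
-/

open Set Metric MeasureTheory Function Polynomial
open scoped NNReal

section DegreeFormula

theorem bijOn_add_of_lipschitzWith {E : Type*} [NormedAddCommGroup E] [CompleteSpace E]
    {g : E → E} {K : ℝ≥0} (hg : LipschitzWith K g) (hK : K < 1) {s : Set E}
    (hs : support g ⊆ s) : BijOn (fun x => x + g x) s s := by
  have hinj : Injective fun x => x + g x := fun x y hxy => by
    have hgx : g x - g y = y - x := by
      rw [sub_eq_sub_iff_add_eq_add, add_comm (g x), add_comm y]
      simpa only [add_comm] using hxy
    have hle : dist x y ≤ K * dist x y := by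
      simpa [dist_eq_norm, hgx, norm_sub_rev y x] using hg.dist_le_mul x y
    have : (K : ℝ) < 1 := hK
    exact dist_le_zero.1 (by nlinarith [dist_nonneg (x := x) (y := y)])
  have hsurj : Surjective fun x => x + g x := fun y => by
    have hcontr : ContractingWith K fun x => y - g x :=
      ⟨hK, fun a b => by simpa only [edist_sub_left] using hg a b⟩
    exact ⟨_, eq_sub_iff_add_eq.1 hcontr.fixedPoint_isFixedPt.symm⟩
  have hfix : ∀ x ∉ s, x + g x = x := fun x hx => by
    rw [notMem_support.1 fun h => hx (hs h), add_zero]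
  refine ⟨fun x hx => ?_, hinj.injOn, fun y hy => ?_⟩
  · by_contra hx'
    exact hx' ((hinj (hfix _ hx')).symm ▸ hx)
  · obtain ⟨x, rfl⟩ := hsurj y
    refine ⟨x, ?_, rfl⟩
    by_contra hx
    exact hx (hfix x hx ▸ hy)

variable {E : Type*} [NormedAddCommGroup E] [NormedSpace ℝ E] [FiniteDimensional ℝ E]

theorem det_one_add_pos_of_norm_lt_one {A : E →L[ℝ] E} (hA : ‖A‖ < 1) : 0 < (1 + A).det := by
  have hne : ∀ B ∈ ball (0 : E →L[ℝ] E) 1, (1 + B).det ≠ 0 := fun B hB => by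
    have hunit : IsUnit (1 + B) := by
      simpa using isUnit_one_sub_of_norm_lt_one (x := -B) (by simpa using hB)
    exact (hunit.map ContinuousLinearMap.toLinearMapRingHom |>.map LinearMap.det).ne_zero
  have hcont : Continuous fun B : E →L[ℝ] E => (1 + B).det :=
    ContinuousLinearMap.continuous_det.comp (continuous_const.add continuous_id)
  by_contra! hneg
  obtain ⟨B, hB, h0⟩ := (convex_ball (0 : E →L[ℝ] E) 1).isPreconnected.intermediate_value
    (mem_ball_zero_iff.2 hA) (mem_ball_self one_pos) hcont.continuousOn
    (show (0 : ℝ) ∈ Icc _ _ from ⟨hneg, by simp [ContinuousLinearMap.det]⟩)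
  exact hne B hB h0

theorem exists_natDegree_le_eval_eq_det_one_add_smul {R E : Type*} [CommRing R] [AddCommGroup E]
    [Module R E] [Module.Free R E] [Module.Finite R E] (A : E →ₗ[R] E) :
    ∃ q : R[X], q.natDegree ≤ Module.finrank R E ∧ ∀ t, q.eval t = (1 + t • A).det := by
  nontriviality R
  classical
  let b := Module.Free.chooseBasis R E
  generalize hM : LinearMap.toMatrix b b A = M
  refine ⟨((X : R[X]) • M.map C + (1 : Matrix _ _ R).map C).det, ?_, fun t => ?_⟩
  · exact (natDegree_det_X_add_C_le M 1).trans_eq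
      (Module.finrank_eq_card_chooseBasisIndex R E).symm
  · rw [← LinearMap.det_toMatrix b, map_add, map_smul, LinearMap.toMatrix_one, hM,
      ← coe_evalRingHom, RingHom.map_det]
    congr 1
    ext i j
    simp [Matrix.one_apply, apply_ite (Polynomial.eval t), add_comm, mul_comm t]

theorem integral_eval_eq_of_infinite {α : Type*} [MeasurableSpace α] {μ : Measure α}
    {q : α → ℝ[X]} {d : ℕ} (hd : ∀ x, (q x).natDegree ≤ d)
    (hint : ∀ t, Integrable (fun x => (q x).eval t) μ) {S : Set ℝ} (hS : S.Infinite) {c : ℝ}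
    (hc : ∀ t ∈ S, ∫ x, (q x).eval t ∂μ = c) (t : ℝ) : ∫ x, (q x).eval t ∂μ = c := by
  obtain ⟨T, hTS, hTcard⟩ := hS.exists_subset_card_eq (d + 1)
  have hT : T.Nonempty := Finset.card_pos.1 (by omega)
  have hlagrange : ∀ x, (q x).eval t =
      ∑ u ∈ T, (q x).eval u * (Lagrange.basis T id u).eval t := fun x => by
    have hdeg : (q x).degree < T.card := by
      rw [hTcard]
      exact (degree_le_of_natDegree_le (hd x)).trans_lt (by exact_mod_cast Nat.lt_succ_self d)
    conv_lhs => rw [Lagrange.eq_interpolate injective_id.injOn hdeg]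
    simp [Lagrange.interpolate_apply, eval_finsetSum]
  calc ∫ x, (q x).eval t ∂μ
      = ∑ u ∈ T, (∫ x, (q x).eval u ∂μ) * (Lagrange.basis T id u).eval t := by
        simp only [hlagrange, ← integral_mul_const]
        exact integral_finsetSum _ fun u _ => (hint u).mul_const _
    _ = c * (∑ u ∈ T, Lagrange.basis T id u).eval t := by
        rw [eval_finsetSum, Finset.mul_sum]
        exact Finset.sum_congr rfl fun u hu => by rw [hc u (hTS hu)]
    _ = c := by rw [Lagrange.sum_basis injective_id.injOn hT, eval_one, mul_one]

theorem abs_integral_mul_sub_integral_mul_le {α : Type*} [MeasurableSpace α] {μ : Measure α}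
    {v w g : α → ℝ} {ε : ℝ} (hvw : ∀ᵐ x ∂μ, |v x - w x| ≤ ε)
    (hv : Integrable (fun x => v x * g x) μ) (hw : Integrable (fun x => w x * g x) μ)
    (hg : Integrable g μ) :
    |∫ x, v x * g x ∂μ - ∫ x, w x * g x ∂μ| ≤ ε * ∫ x, |g x| ∂μ := by
  rw [← integral_sub hv hw, ← integral_const_mul, ← Real.norm_eq_abs]
  refine norm_integral_le_of_norm_le (hg.abs.const_mul ε) ?_
  filter_upwards [hvw] with x hx
  rw [← sub_mul, norm_mul, Real.norm_eq_abs, Real.norm_eq_abs]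
  exact mul_le_mul_of_nonneg_right hx (abs_nonneg _)

/-- The continuous functions on `E` which restrict to a polynomial on every affine line, with a
degree bound common to all lines: a coordinate-free class of polynomial functions. The bound is
what interpolation in `t` needs, the algebra structure what Stone–Weierstrass needs. -/
def polynomialOnLines (E : Type*) [NormedAddCommGroup E] [NormedSpace ℝ E] :
    Subalgebra ℝ C(E, ℝ) where
  carrier := {w | ∃ d, ∀ x v, ∃ q : ℝ[X], q.natDegree ≤ d ∧ ∀ t, q.eval t = w (x + t • v)}
  mul_mem' := by
    rintro w₁ w₂ ⟨d₁, h₁⟩ ⟨d₂, h₂⟩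
    refine ⟨d₁ + d₂, fun x v => ?_⟩
    obtain ⟨q₁, hd₁, hq₁⟩ := h₁ x v
    obtain ⟨q₂, hd₂, hq₂⟩ := h₂ x v
    exact ⟨q₁ * q₂, natDegree_mul_le_of_le hd₁ hd₂, fun t => by simp [hq₁, hq₂]⟩
  add_mem' := by
    rintro w₁ w₂ ⟨d₁, h₁⟩ ⟨d₂, h₂⟩
    refine ⟨max d₁ d₂, fun x v => ?_⟩
    obtain ⟨q₁, hd₁, hq₁⟩ := h₁ x v
    obtain ⟨q₂, hd₂, hq₂⟩ := h₂ x v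
    exact ⟨q₁ + q₂, natDegree_add_le_of_le hd₁ hd₂, fun t => by simp [hq₁, hq₂]⟩
  algebraMap_mem' c := ⟨0, fun _ _ => ⟨C c, (natDegree_C c).le, fun t => by simp⟩⟩

theorem separatesPoints_polynomialOnLines (E : Type*) [NormedAddCommGroup E] [NormedSpace ℝ E] :
    (polynomialOnLines E).SeparatesPoints := fun x y hxy => by
  obtain ⟨ℓ, hℓ⟩ := SeparatingDual.exists_separating_of_ne (R := ℝ) hxy
  have hmem : (ℓ : C(E, ℝ)) ∈ polynomialOnLines E :=
    ⟨1, fun z v => ⟨C (ℓ v) * X + C (ℓ z), natDegree_linear_le, fun t => by simp; ring⟩⟩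
  exact ⟨ℓ, ⟨ℓ, hmem, rfl⟩, hℓ⟩

variable [MeasurableSpace E] [BorelSpace E] (μ : Measure E) [μ.IsAddHaarMeasure]

theorem setIntegral_comp_add_mul_det_of_lipschitzWith {g : E → E} (hg : Differentiable ℝ g)
    {K : ℝ≥0} (hgK : LipschitzWith K g) (hK : K < 1) {s : Set E} (hs : MeasurableSet s)
    (hgs : support g ⊆ s) (w : E → ℝ) :
    ∫ x in s, w (x + g x) * (1 + fderiv ℝ g x).det ∂μ = ∫ x in s, w x ∂μ := by
  have hbij := bijOn_add_of_lipschitzWith hgK hK hgs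
  have hderiv : ∀ x ∈ s, HasFDerivWithinAt (fun x => x + g x) (1 + fderiv ℝ g x) s x :=
    fun x _ => ((hasFDerivAt_id x).add (hg x).hasFDerivAt).hasFDerivWithinAt
  have hpos : ∀ x, 0 < (1 + fderiv ℝ g x).det := fun x =>
    det_one_add_pos_of_norm_lt_one ((norm_fderiv_le_of_lipschitz ℝ hgK).trans_lt hK)
  conv_rhs => rw [← hbij.image_eq,
    integral_image_eq_integral_abs_det_fderiv_smul μ hs hderiv hbij.injOn]
  simp only [abs_of_pos (hpos _), smul_eq_mul, mul_comm]

variable {f : E → E} {s : Set E}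

theorem setIntegral_comp_add_mul_det_of_mem_polynomialOnLines (hf : ContDiff ℝ 1 f)
    (hs : IsCompact s) (hfs : support f ⊆ s) {w : C(E, ℝ)} (hw : w ∈ polynomialOnLines E) :
    ∫ x in s, w (x + f x) * (1 + fderiv ℝ f x).det ∂μ = ∫ x in s, w x ∂μ := by
  obtain ⟨K, hK⟩ := ContDiff.lipschitzWith_of_hasCompactSupport
    (HasCompactSupport.intro hs fun x hx => notMem_support.1 fun h => hx (hfs h)) hf one_ne_zero
  obtain ⟨d, hd⟩ := hw
  choose p hpd hp using fun x => hd x (f x)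
  choose q hqd hq using fun x =>
    exists_natDegree_le_eval_eq_det_one_add_smul (fderiv ℝ f x : E →ₗ[ℝ] E)
  have heval : ∀ t x, (p x * q x).eval t =
      w (x + t • f x) * (1 + t • fderiv ℝ f x).det := fun t x => by rw [eval_mul, hp, hq]; rfl
  have hint : ∀ t, IntegrableOn (fun x => (p x * q x).eval t) s μ := fun t => by
    have hdet : Continuous fun x => (1 + t • fderiv ℝ f x).det :=
      ContinuousLinearMap.continuous_det.comp
        (continuous_const.add ((hf.continuous_fderiv one_ne_zero).const_smul t))
    have hf' := hf.continuous
    simp only [heval]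
    exact ContinuousOn.integrableOn_compact hs (by fun_prop)
  have hsmall : ∀ t ∈ Ioo 0 ((K + 1 : ℝ)⁻¹),
      ∫ x in s, (p x * q x).eval t ∂μ = ∫ x in s, w x ∂μ := by
    intro t ht
    have htK : ‖t‖₊ * K < 1 := by
      rw [← NNReal.coe_lt_coe, NNReal.coe_mul, coe_nnnorm, Real.norm_of_nonneg ht.1.le]
      have := (lt_inv_comm₀ ht.1 (by positivity)).1 ht.2
      push_cast
      nlinarith [mul_inv_cancel₀ ht.1.ne', ht.1]
    have hsmul := setIntegral_comp_add_mul_det_of_lipschitzWith μ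
      ((hf.differentiable one_ne_zero).const_smul t) ((lipschitzWith_smul t).comp hK) htK
      hs.measurableSet ((support_const_smul_subset t f).trans hfs) w
    simpa only [heval, Pi.smul_apply,
      fderiv_const_smul (hf.differentiable one_ne_zero _)] using hsmul
  have := integral_eval_eq_of_infinite (fun x => natDegree_mul_le_of_le (hpd x) (hqd x)) hint
    (Ioo_infinite (by positivity)) hsmall 1
  simpa only [heval, one_smul] using this

theorem setIntegral_comp_add_mul_det (hf : ContDiff ℝ 1 f) (hs : IsCompact s)
    (hfs : support f ⊆ s) (w : C(E, ℝ)) :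
    ∫ x in s, w (x + f x) * (1 + fderiv ℝ f x).det ∂μ = ∫ x in s, w x ∂μ := by
  have hfcont := hf.continuous
  have hdet : Continuous fun x => (1 + fderiv ℝ f x).det :=
    ContinuousLinearMap.continuous_det.comp
      (continuous_const.add (hf.continuous_fderiv one_ne_zero))
  have hint : ∀ {v : E → ℝ}, Continuous v → IntegrableOn v s μ := fun hv =>
    hv.continuousOn.integrableOn_compact hs
  set M := ∫ x in s, |(1 + fderiv ℝ f x).det| ∂μ + ∫ _ in s, |(1 : ℝ)| ∂μ
  have : 0 ≤ M := by positivity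
  refine eq_of_forall_dist_le fun ε hε => ?_
  set δ := ε / (M + 1)
  have hδ : 0 < δ := by positivity
  obtain ⟨v, hv, hvw⟩ :=
    ContinuousMap.exists_mem_subalgebra_near_continuous_of_isCompact_of_separatesPoints
      (separatesPoints_polynomialOnLines E) w (hs.union (hs.image (continuous_id.add hfcont))) hδ
  have hleft := abs_integral_mul_sub_integral_mul_le (μ := μ.restrict s)
    (ae_restrict_of_forall_mem hs.measurableSet fun x hx =>
      (hvw (x + f x) (.inr (mem_image_of_mem _ hx))).le)
    (hint (v := fun x => v (x + f x) * (1 + fderiv ℝ f x).det) (by fun_prop))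
    (hint (v := fun x => w (x + f x) * (1 + fderiv ℝ f x).det) (by fun_prop)) (hint hdet)
  have hright := abs_integral_mul_sub_integral_mul_le (μ := μ.restrict s) (g := fun _ => 1)
    (ae_restrict_of_forall_mem hs.measurableSet fun x hx => (hvw x (.inl hx)).le)
    (hint (by fun_prop)) (hint (by fun_prop)) (hint continuous_const)
  rw [setIntegral_comp_add_mul_det_of_mem_polynomialOnLines μ hf hs hfs hv] at hleft
  simp only [mul_one] at hright
  calc dist (∫ x in s, w (x + f x) * (1 + fderiv ℝ f x).det ∂μ) (∫ x in s, w x ∂μ)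
      ≤ δ * M := by
        rw [mul_add]
        exact (dist_triangle_left _ _ (∫ x in s, v x ∂μ)).trans (add_le_add hleft hright)
    _ ≤ δ * (M + 1) := by gcongr; linarith
    _ = ε := div_mul_cancel₀ ε (by positivity)

end DegreeFormula

theorem exists_add_eq_zero {E : Type*} [NormedAddCommGroup E] [NormedSpace ℝ E]
    [FiniteDimensional ℝ E] {f : E → E} (hf : ContDiff ℝ 1 f) (hfc : HasCompactSupport f) :
    ∃ x, x + f x = 0 := by
  by_contra! hne
  borelize E
  obtain ⟨R, hR, hfR⟩ := hfc.isBounded.subset_closedBall_lt 0 0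
  have hs : IsCompact (closedBall (0 : E) R) := isCompact_closedBall 0 R
  obtain ⟨a, -, ha⟩ := hs.exists_isMinOn (nonempty_closedBall.2 hR.le)
    (continuous_id.add hf.continuous).norm.continuousOn
  set δ := ‖a + f a‖
  have hδ : 0 < δ := norm_pos_iff.2 (hne a)
  let w : C(E, ℝ) := ⟨fun y => max 0 (δ - ‖y‖), by fun_prop⟩
  have hw : ∀ x ∈ closedBall (0 : E) R, w (x + f x) = 0 := fun x hx =>
    max_eq_left (sub_nonpos.2 (ha hx))
  have hzero : ∫ x in closedBall 0 R, w x ∂Measure.addHaar = 0 := by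
    rw [← setIntegral_comp_add_mul_det _ hf hs ((subset_tsupport f).trans hfR) w]
    exact setIntegral_eq_zero_of_forall_eq_zero fun x hx => by rw [hw x hx, zero_mul]
  have hsupp : ball 0 (min δ R) ⊆ support w ∩ closedBall 0 R := fun x hx => by
    have hx' := lt_min_iff.1 (mem_ball_zero_iff.1 hx)
    exact ⟨(lt_max_of_lt_right (sub_pos.2 hx'.1)).ne', mem_closedBall_zero_iff.2 hx'.2.le⟩
  have hint : IntegrableOn w (closedBall 0 R) Measure.addHaar :=
    w.continuous.continuousOn.integrableOn_compact hs
  refine hzero.not_gt ((setIntegral_pos_iff_support_of_nonneg_ae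
    (ae_of_all _ fun x => le_max_left _ _) hint).2 ?_)
  exact (measure_ball_pos _ 0 (lt_min hδ hR)).trans_le (measure_mono hsupp)

theorem exists_isFixedPt_of_forall_dist_le {α : Type*} [MetricSpace α] {K : Set α}
    (hK : IsCompact K) {f : α → α} (hf : ContinuousOn f K)
    (happrox : ∀ ε > 0, ∃ x ∈ K, dist (f x) x ≤ ε) : ∃ x ∈ K, IsFixedPt f x := by
  obtain ⟨x₁, hx₁, -⟩ := happrox 1 one_pos
  obtain ⟨x, hx, hmin⟩ := hK.exists_isMinOn ⟨x₁, hx₁⟩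
    (continuous_dist.comp_continuousOn (hf.prodMk continuousOn_id))
  refine ⟨x, hx, dist_le_zero.1 (le_of_forall_pos_le_add fun ε hε => ?_)⟩
  obtain ⟨y, hy, hyε⟩ := happrox ε hε
  simpa using (hmin hy).trans hyε

theorem exists_isFixedPt_of_isBounded_range {E : Type*} [NormedAddCommGroup E] [NormedSpace ℝ E]
    [FiniteDimensional ℝ E] {f : E → E} (hf : Continuous f)
    (hbdd : Bornology.IsBounded (range f)) : ∃ x, IsFixedPt f x := by
  obtain ⟨R, hR, hfR⟩ := hbdd.subset_closedBall_lt 0 0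
  let χ : ContDiffBump (0 : E) := ⟨R + 1, R + 2, by positivity, by linarith⟩
  have hχf : Continuous fun x => χ x • f x := χ.continuous.smul hf
  have hχ : ∀ x, ‖χ x • f x‖ ≤ R := fun x => by
    rw [norm_smul, Real.norm_of_nonneg χ.nonneg]
    exact (mul_le_of_le_one_left (norm_nonneg _) χ.le_one).trans
      (mem_closedBall_zero_iff.1 (hfR (mem_range_self x)))
  have hball : IsCompact (closedBall (0 : E) (R + 1)) := isCompact_closedBall 0 (R + 1)
  obtain ⟨x, -, hx⟩ := exists_isFixedPt_of_forall_dist_le hball hf.continuousOn fun ε hε => by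
    obtain ⟨g, hg, hgf, hgsupp⟩ := hχf.exists_contDiff_approx 1
      (continuous_const (y := min ε 1)) fun _ => lt_min hε one_pos
    have hgc : HasCompactSupport g :=
      (χ.hasCompactSupport.smul_right (f' := f)).mono hgsupp
    obtain ⟨x, hx⟩ := exists_add_eq_zero hg.neg hgc.neg
    have hgx : g x = x := (add_neg_eq_zero.1 hx).symm
    have hxf : dist x (χ x • f x) < min ε 1 := by simpa only [hgx] using hgf x
    have hxR : x ∈ closedBall 0 (R + 1) := by
      rw [mem_closedBall, add_comm]
      exact (dist_triangle _ (χ x • f x) _).trans (add_le_add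
        (hxf.le.trans (min_le_right _ _)) (by simpa only [dist_zero_right] using hχ x))
    refine ⟨x, hxR, ?_⟩
    rw [χ.one_of_mem_closedBall hxR, one_smul, dist_comm] at hxf
    exact hxf.le.trans (min_le_left _ _)
  exact ⟨x, hx⟩

theorem exists_lipschitzWith_one_retraction {H : Type*} [NormedAddCommGroup H]
    [InnerProductSpace ℝ H] [CompleteSpace H] {K : Set H} (hne : K.Nonempty) (hcl : IsClosed K)
    (hconv : Convex ℝ K) :
    ∃ P : H → H, LipschitzWith 1 P ∧ (∀ x, P x ∈ K) ∧ ∀ x ∈ K, P x = x := by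
  choose P hPK hPmin using exists_norm_eq_iInf_of_complete_convex hne hcl.isComplete hconv
  have hP : ∀ x, ∀ y ∈ K, inner ℝ (x - P x) (y - P x) ≤ 0 := fun x =>
    (norm_eq_iInf_iff_real_inner_le_zero hconv (hPK x)).1 (hPmin x)
  refine ⟨P, LipschitzWith.of_dist_le_mul fun x y => ?_, hPK, fun x hx => ?_⟩
  · have hmono : ‖P x - P y‖ * ‖P x - P y‖ ≤ inner ℝ (x - y) (P x - P y) := by
      have hx := hP x (P y) (hPK y)
      have hy := hP y (P x) (hPK x)
      rw [← real_inner_self_eq_norm_mul_norm]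
      simp only [inner_sub_left, inner_sub_right] at hx hy ⊢
      linarith
    rw [NNReal.coe_one, one_mul, dist_eq_norm, dist_eq_norm]
    rcases (norm_nonneg (P x - P y)).eq_or_lt with h0 | hpos
    · exact h0 ▸ norm_nonneg _
    · exact le_of_mul_le_mul_right (hmono.trans (real_inner_le_norm _ _)) hpos
  · exact (sub_eq_zero.1 (real_inner_self_nonpos.1 (hP x x hx))).symm

theorem brouwer_fixedPoint {E : Type*} [NormedAddCommGroup E] [NormedSpace ℝ E]
    [FiniteDimensional ℝ E] {K : Set E} (hne : K.Nonempty) (hcpt : IsCompact K)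
    (hconv : Convex ℝ K) {f : E → E} (hf : ContinuousOn f K) (hmaps : MapsTo f K K) :
    ∃ x ∈ K, IsFixedPt f x := by
  let e := toEuclidean (E := E)
  have heK : IsCompact (e '' K) := hcpt.image e.continuous
  obtain ⟨P, hP, hPK, hPfix⟩ := exists_lipschitzWith_one_retraction (hne.image e) heK.isClosed
    (hconv.linear_image e.toLinearEquiv.toLinearMap)
  have hsymm : ∀ z, e.symm (P z) ∈ K := fun z => by
    obtain ⟨x, hx, hxz⟩ := hPK z
    rwa [← hxz, e.symm_apply_apply]
  have hcont : Continuous fun z => e (f (e.symm (P z))) := e.continuous.comp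
    (hf.comp_continuous (e.symm.continuous.comp hP.continuous) hsymm)
  have hrange : range (fun z => e (f (e.symm (P z)))) ⊆ e '' K :=
    range_subset_iff.2 fun z => mem_image_of_mem e (hmaps (hsymm z))
  obtain ⟨z, hz⟩ := exists_isFixedPt_of_isBounded_range hcont (heK.isBounded.subset hrange)
  obtain ⟨x, hx, rfl⟩ : z ∈ e '' K := hz ▸ hrange (mem_range_self z)
  refine ⟨x, hx, e.injective ?_⟩
  simpa only [hPfix _ (mem_image_of_mem e hx), e.symm_apply_apply] using hz.eq

theorem exists_finset_stdSimplex_approx {Y : Type*} [NormedAddCommGroup Y] [NormedSpace ℝ Y]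
    {X : Set Y} (hcpt : IsCompact X) {ε : ℝ} (hε : 0 < ε) :
    ∃ t : Finset Y, ↑t ⊆ X ∧ ∃ q : Y → t → ℝ, Continuous q ∧ MapsTo q X (stdSimplex ℝ t) ∧
      ∀ y ∈ X, dist (∑ v, q y v • (v : Y)) y ≤ ε := by
  obtain ⟨t, htX, htfin, hcover⟩ := hcpt.finite_cover_balls hε
  lift t to Finset Y using htfin
  obtain ⟨ρ, hρ⟩ := PartitionOfUnity.exists_isSubordinate hcpt.isClosed
    (fun v : t => ball (v : Y) ε) (fun _ => isOpen_ball)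
    (hcover.trans_eq (biUnion_eq_iUnion _ _))
  have hsum : ∀ y ∈ X, ∑ v, ρ v y = 1 := fun y hy => by
    rw [← finsum_eq_sum_of_fintype, ρ.sum_eq_one hy]
  refine ⟨t, htX, fun y v => ρ v y, by fun_prop,
    fun y hy => ⟨fun v => ρ.nonneg v y, hsum y hy⟩, fun y hy => ?_⟩
  have hmem := (convex_closedBall y ε).finsum_mem (w := fun v => ρ v y)
    (z := fun v : t => (v : Y)) (fun v => ρ.nonneg v y) (ρ.sum_eq_one hy) fun v hv => by
      rw [mem_closedBall, dist_comm]
      exact (hρ v (subset_tsupport _ hv)).le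
  rwa [finsum_eq_sum_of_fintype] at hmem

theorem schauder_fixedPoint {Y : Type*} [NormedAddCommGroup Y] [NormedSpace ℝ Y] {X : Set Y}
    (hne : X.Nonempty) (hcpt : IsCompact X) (hconv : Convex ℝ X) {f : Y → Y}
    (hf : ContinuousOn f X) (hmaps : MapsTo f X X) : ∃ x ∈ X, IsFixedPt f x := by
  refine exists_isFixedPt_of_forall_dist_le hcpt hf fun ε hε => ?_
  obtain ⟨t, htX, q, hqcont, hq, hdist⟩ := exists_finset_stdSimplex_approx hcpt hε
  let b : (t → ℝ) → Y := fun p => ∑ v, p v • (v : Y)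
  have hb : MapsTo b (stdSimplex ℝ t) X := fun p hp =>
    hconv.sum_mem (fun v _ => hp.1 v) hp.2 fun v _ => htX v.2
  have hbcont : Continuous b := by fun_prop
  obtain ⟨p, hp, hfix⟩ := brouwer_fixedPoint (hne.image q |>.mono hq.image_subset)
    (isCompact_stdSimplex ℝ t) (convex_stdSimplex ℝ t) (f := fun p => q (f (b p)))
    (hqcont.comp_continuousOn (hf.comp hbcont.continuousOn hb)) (hq.comp (hmaps.comp hb))
  refine ⟨b p, hb hp, ?_⟩
  have hdist_p := hdist _ (hmaps (hb hp))
  rwa [show q (f (b p)) = p from hfix, dist_comm] at hdist_p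

section PeriodicOrbit

variable {G Y : Type*} [AddCommGroup G] [LinearOrder G] [IsOrderedAddMonoid G]
  {φ : G → G → Y → Y} {T : G}

theorem toIcoDiv_nonneg [Archimedean G] (hT : 0 < T) {a b : G} (hab : a ≤ b) :
    0 ≤ toIcoDiv hT a b := by
  have hlt : (0 : ℤ) • T < (toIcoDiv hT a b + 1) • T := by
    have := toIcoMod_lt_right hT a b
    rw [zero_zsmul, add_one_zsmul]
    rw [toIcoMod, sub_lt_iff_lt_add, add_assoc] at this
    simpa [add_comm] using hab.trans_lt this
  exact Int.lt_add_one_iff.1 ((zsmul_lt_zsmul_iff_left hT).1 hlt)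

theorem process_add_zsmul (hper : ∀ s t x, s ≤ t → φ (t + T) (s + T) x = φ t s x) (k : ℤ)
    {s t : G} (hst : s ≤ t) (x : Y) : φ (t + k • T) (s + k • T) x = φ t s x := by
  have hshift : Periodic (fun r => φ (t + r) (s + r) x) T := fun r => by
    simpa only [add_assoc] using hper (s + r) (t + r) x (add_le_add_left hst r)
  simpa only [zero_add, add_zero] using hshift.zsmul k 0

theorem process_add_nsmul_of_isFixedPt (hT : 0 ≤ T)
    (hcomp : ∀ r s t x, r ≤ s → s ≤ t → φ t s (φ s r x) = φ t r x)
    (hper : ∀ s t x, s ≤ t → φ (t + T) (s + T) x = φ t s x) {x₀ : Y}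
    (hx₀ : IsFixedPt (φ T 0) x₀) (n : ℕ) {s : G} (hs : 0 ≤ s) :
    φ (s + n • T) 0 x₀ = φ s 0 x₀ := by
  induction n with
  | zero => rw [zero_nsmul, add_zero]
  | succ n ih =>
    have hsn : 0 ≤ s + n • T := add_nonneg hs (nsmul_nonneg hT n)
    calc φ (s + (n + 1) • T) 0 x₀
        = φ (s + n • T + T) (0 + T) (φ T 0 x₀) := by
          rw [zero_add, hcomp 0 T _ x₀ hT (le_add_of_nonneg_left hsn), succ_nsmul, add_assoc]
      _ = φ s 0 x₀ := by rw [hx₀.eq, hper 0 _ x₀ hsn, ih]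

theorem exists_periodic_solution_of_isFixedPt [Archimedean G] (hT : 0 < T)
    (hcomp : ∀ r s t x, r ≤ s → s ≤ t → φ t s (φ s r x) = φ t r x)
    (hper : ∀ s t x, s ≤ t → φ (t + T) (s + T) x = φ t s x) {x₀ : Y}
    (hx₀ : IsFixedPt (φ T 0) x₀) :
    ∃ x : G → Y, Periodic x T ∧ ∀ t₀ t, t₀ ≤ t → φ t t₀ (x t₀) = x t := by
  let x : G → Y := fun t => φ (toIcoMod hT 0 t) 0 x₀
  have hx : Periodic x T := fun t => by simp only [x, toIcoMod_add_right]
  have hx_nonneg : ∀ s, 0 ≤ s → φ s 0 x₀ = x s := fun s hs => by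
    obtain ⟨n, hn⟩ := Int.eq_ofNat_of_zero_le (toIcoDiv_nonneg hT hs)
    have hmod : toIcoMod hT 0 s + n • T = s := by
      rw [← natCast_zsmul, ← hn, toIcoMod_add_toIcoDiv_zsmul]
    simpa only [hmod] using
      process_add_nsmul_of_isFixedPt hT.le hcomp hper hx₀ n (toIcoMod_mem_Ico' hT s).1
  refine ⟨x, hx, fun t₀ t ht => ?_⟩
  set k := toIcoDiv hT 0 t₀
  have hmod : t₀ - k • T = toIcoMod hT 0 t₀ := self_sub_toIcoDiv_zsmul hT 0 t₀
  have hmod_nonneg : 0 ≤ t₀ - k • T := hmod ▸ (toIcoMod_mem_Ico' hT t₀).1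
  have hle : t₀ - k • T ≤ t - k • T := sub_le_sub_right ht _
  calc φ t t₀ (x t₀)
      = φ (t - k • T) (t₀ - k • T) (φ (t₀ - k • T) 0 x₀) := by
        rw [← process_add_zsmul hper k hle, sub_add_cancel, sub_add_cancel, hmod]
    _ = φ (t - k • T) 0 x₀ := hcomp 0 _ _ x₀ hmod_nonneg hle
    _ = x (t - k • T) := hx_nonneg _ (hmod_nonneg.trans hle)
    _ = x t := hx.sub_zsmul_eq k

end PeriodicOrbit

theorem periodic_orbit_of_invariant_compact_convex_general {G Y : Type*} [AddCommGroup G]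
    [LinearOrder G] [IsOrderedAddMonoid G] [Archimedean G] [NormedAddCommGroup Y]
    [NormedSpace ℝ Y] {T : G} (hT : 0 < T) {φ : G → G → Y → Y}
    (hcomp : ∀ r s t x, r ≤ s → s ≤ t → φ t s (φ s r x) = φ t r x)
    (hper : ∀ s t x, s ≤ t → φ (t + T) (s + T) x = φ t s x) {X : Set Y} (hne : X.Nonempty)
    (hcpt : IsCompact X) (hconv : Convex ℝ X) (hcont : ContinuousOn (φ T 0) X)
    (hmaps : MapsTo (φ T 0) X X) :
    ∃ x : G → Y, Periodic x T ∧ ∀ t₀ t, t₀ ≤ t → φ t t₀ (x t₀) = x t := by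
  obtain ⟨x₀, -, hx₀⟩ := schauder_fixedPoint hne hcpt hconv hcont hmaps
  exact exists_periodic_solution_of_isFixedPt hT hcomp hper hx₀

/-- Let `Y` be a real Banach space, `T̄ > 0`, and let `φ` be a process on `Y`
that is `T̄`-periodic in time (here `φ t t₀ x` denotes `φ(t, t₀, x)`).  If `X⁰ ⊆ Y` is a
nonempty, compact and convex set such that `φ T̄ 0 x ∈ X⁰` for every `x ∈ X⁰`, then there
exists a global periodic solution `x : ℝ → Y` with period `T̄`: `x (t + T̄) = x t` for every
`t`, and `φ t t₀ (x t₀) = x t` for every `t₀` and every `t ≥ t₀`. -/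
theorem periodic_orbit_of_invariant_compact_convex
    {Y : Type*} [NormedAddCommGroup Y] [NormedSpace ℝ Y] [CompleteSpace Y]
    (Tbar : ℝ) (hTbar : 0 < Tbar)
    (φ : ℝ → ℝ → Y → Y)
    (hφ_id : ∀ (t₀ : ℝ) (x : Y), φ t₀ t₀ x = x)
    (hφ_comp : ∀ (r s t : ℝ) (x : Y), r ≤ s → s ≤ t → φ t s (φ s r x) = φ t r x)
    (hφ_per : ∀ (t₀ t : ℝ) (x : Y), t₀ ≤ t → φ (t + Tbar) (t₀ + Tbar) x = φ t t₀ x)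
    (hφ_cont : ∀ (t₀ t : ℝ), t₀ ≤ t → Continuous (φ t t₀))
    (X : Set Y) (hX_ne : X.Nonempty) (hX_cpt : IsCompact X) (hX_conv : Convex ℝ X)
    (hX_inv : ∀ x ∈ X, φ Tbar 0 x ∈ X) :
    ∃ x : ℝ → Y, (∀ t : ℝ, x (t + Tbar) = x t) ∧
      ∀ (t₀ t : ℝ), t₀ ≤ t → φ t t₀ (x t₀) = x t :=
  periodic_orbit_of_invariant_compact_convex_general hTbar hφ_comp hφ_per hX_ne hX_cpt hX_conv
    (hφ_cont 0 Tbar hTbar.le).continuousOn hX_inv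
end

section
/- Let Y be a real Banach space, T̄ > 0, and let φ be a process on Y that is T̄-periodic in time. Let x : ℝ → Y satisfy x(t + T̄) = x(t) for all t ∈ ℝ and φ(t, t₀, x(t₀)) = x(t) for all t₀ ∈ ℝ and t ≥ t₀. Assume: (H1) there exist C₁ ≥ 1 and λ₁ > 0 such that for every t₀ ∈ ℝ, every h ∈ Y with ‖h‖ ≤ λ₁ and every t ∈ [t₀, t₀ + T̄], ‖φ(t, t₀, x(t₀) + h) − x(t)‖ ≤ min{C₁‖h‖, 1}; (H2) there exist a bounded linear operator V : Y → Y with operator norm ‖V‖ = a < 1, and constants C₃ > 0, λ₃ > 0, such that ‖φ(T̄, 0, x(0) + h) − x(T̄) − V h‖ ≤ C₃‖h‖² whenever ‖h‖ ≤ λ₃. Then for every ε > 0 with a + ε < 1 there exist δ > 0 and D > 0 such that for every t₀ ∈ ℝ, every t ≥ t₀ and every h ∈ Y with ‖h‖ ≤ δ, one has ‖φ(t, t₀, x(t₀) + h) − x(t)‖ ≤ D e^{ln(a+ε)(t−t₀)/T̄} ‖h‖. -/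
/-!
Write `P` for the period map `φ T 0`. Being Fréchet differentiable at its fixed point `x 0` with a
derivative of norm less than `b`, it contracts distances to `x 0` by the factor `b` on a small ball,
so its iterates contract them by `b ^ n`. By periodicity one may start at a time `s ∈ (-T, 0]`. Then
the path from `s` to `t` consists of a stretch up to time `0`, a number `n` of periods, and a
stretch after time `n * T`, the first and last of length at most `T`. Each of those two costs at
most a factor `C`, and `t - s ≤ (n + 2) * T` gives `b ^ n ≤ b⁻² * exp (log b * (t - s) / T)`.
-/

open Set Function Filter Topology

theorem dist_iterate_le_pow_mul {X : Type*} [PseudoMetricSpace X] {f : X → X} {p : X} {b r : ℝ}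
    (hb₀ : 0 ≤ b) (hb₁ : b ≤ 1) (hf : ∀ y, dist y p ≤ r → dist (f y) p ≤ b * dist y p)
    {y : X} (hy : dist y p ≤ r) (n : ℕ) : dist (f^[n] y) p ≤ b ^ n * dist y p := by
  induction n with
  | zero => simp
  | succ n ih =>
    have hball : dist (f^[n] y) p ≤ r :=
      (ih.trans (mul_le_of_le_one_left dist_nonneg (pow_le_one₀ hb₀ hb₁))).trans hy
    calc dist (f^[n + 1] y) p = dist (f (f^[n] y)) p := by rw [iterate_succ_apply']
      _ ≤ b * dist (f^[n] y) p := hf _ hball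
      _ ≤ b * (b ^ n * dist y p) := by gcongr
      _ = b ^ (n + 1) * dist y p := by ring

theorem pow_le_exp_log_mul_div_sq {b T u : ℝ} (hb₀ : 0 < b) (hb₁ : b ≤ 1) (hT : 0 < T) {n : ℕ}
    (hu : u ≤ (n + 2) * T) : b ^ n ≤ Real.exp (Real.log b * u / T) / b ^ 2 := by
  rw [le_div_iff₀ (by positivity), ← pow_add, ← Real.rpow_natCast, Real.rpow_def_of_pos hb₀,
    Real.exp_le_exp, mul_div_assoc]
  refine mul_le_mul_of_nonpos_left ?_ (Real.log_nonpos hb₀.le hb₁)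
  rw [div_le_iff₀ hT]
  exact_mod_cast hu

section FDeriv

variable {𝕜 E F : Type*} [NontriviallyNormedField 𝕜] [SeminormedAddCommGroup E] [NormedSpace 𝕜 E]
  [SeminormedAddCommGroup F] [NormedSpace 𝕜 F] {f : E → F} {f' : E →L[𝕜] F} {p : E}

theorem eventually_dist_le_mul_of_hasFDerivAt (hf : HasFDerivAt f f' p) {b : ℝ} (hb : ‖f'‖ < b) :
    ∀ᶠ y in 𝓝 p, dist (f y) (f p) ≤ b * dist y p := by
  filter_upwards [hf.isLittleO.def (sub_pos.mpr hb)] with y hy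
  rw [dist_eq_norm, dist_eq_norm]
  calc ‖f y - f p‖ ≤ ‖f y - f p - f' (y - p)‖ + ‖f' (y - p)‖ := norm_le_norm_sub_add _ _
    _ ≤ (b - ‖f'‖) * ‖y - p‖ + ‖f'‖ * ‖y - p‖ := add_le_add hy (f'.le_opNorm _)
    _ = b * ‖y - p‖ := by ring

theorem hasFDerivAt_of_norm_remainder_le_sq {C r : ℝ} (hr : 0 < r)
    (hf : ∀ h, ‖h‖ ≤ r → ‖f (p + h) - f p - f' h‖ ≤ C * ‖h‖ ^ 2) : HasFDerivAt f f' p := by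
  have hO : (fun y ↦ f y - f p - f' (y - p)) =O[𝓝 p] fun y ↦ ‖y - p‖ ^ 2 := by
    refine .of_bound C ?_
    filter_upwards [Metric.closedBall_mem_nhds p hr] with y hy
    simpa only [norm_pow, norm_norm, add_sub_cancel] using
      hf (y - p) (mem_closedBall_iff_norm.mp hy)
  exact .of_isLittleO (hO.trans_isLittleO (Asymptotics.isLittleO_pow_sub_sub p one_lt_two))

end FDeriv

/-- A `T`-periodic process on `X`: `φ t s` carries states at time `s` to states at time `t ≥ s`.
The values `φ t s` with `t < s` are unconstrained, and no continuity is imposed on `φ t s`. -/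
structure IsPeriodicEvolution {X : Type*} (φ : ℝ → ℝ → X → X) (T : ℝ) : Prop where
  refl : ∀ t y, φ t t y = y
  comp : ∀ r s t y, r ≤ s → s ≤ t → φ t s (φ s r y) = φ t r y
  periodic : ∀ s t y, s ≤ t → φ (t + T) (s + T) y = φ t s y

/-- Hypothesis (H1) for the curve `x`: over a time span of length at most `T`, deviations from `x`
of initial size at most `r` grow by at most the factor `C`, uniformly in the initial time. -/
def HasGrowthBound {X : Type*} [PseudoMetricSpace X] (φ : ℝ → ℝ → X → X) (x : ℝ → X)
    (T C r : ℝ) : Prop :=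
  ∀ ⦃s t⦄, t ∈ Icc s (s + T) → ∀ ⦃y⦄, dist y (x s) ≤ r → dist (φ t s y) (x t) ≤ C * dist y (x s)

namespace IsPeriodicEvolution

section Algebra

variable {X : Type*} {φ : ℝ → ℝ → X → X} {T : ℝ}

theorem apply_add_int_mul (hφ : IsPeriodicEvolution φ T) {s t : ℝ} (hst : s ≤ t) (k : ℤ) (y : X) :
    φ (t + k * T) (s + k * T) y = φ t s y := by
  have hper : Periodic (fun u ↦ φ (t + u) (s + u) y) T := fun u ↦ by
    simpa only [add_assoc] using hφ.periodic _ _ y (add_le_add_left hst u)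
  simpa only [add_zero] using hper.int_mul_eq k

theorem apply_nat_mul_zero (hφ : IsPeriodicEvolution φ T) (hT : 0 ≤ T) (n : ℕ) (y : X) :
    φ (n * T) 0 y = (φ T 0)^[n] y := by
  induction n with
  | zero => simp only [Nat.cast_zero, zero_mul, hφ.refl, iterate_zero_apply]
  | succ n ih =>
    have hshift := hφ.apply_add_int_mul hT n (φ (n * T) 0 y)
    rw [Int.cast_natCast, zero_add,
      hφ.comp _ _ _ _ (by positivity) (le_add_of_nonneg_left hT)] at hshift
    rw [iterate_succ_apply', ← ih, ← hshift, Nat.cast_succ, add_one_mul, add_comm T]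

end Algebra

variable {X : Type*} [PseudoMetricSpace X] {φ : ℝ → ℝ → X → X} {x : ℝ → X} {T C b r : ℝ}

theorem dist_le_of_mem_Icc (hφ : IsPeriodicEvolution φ T) (hx : Periodic x T) (hT : 0 ≤ T)
    (hC : 0 ≤ C) (hgrowth : HasGrowthBound φ x T C r) (hb₀ : 0 ≤ b) (hb₁ : b ≤ 1)
    (hcontr : ∀ y, dist y (x 0) ≤ r → dist (φ T 0 y) (x 0) ≤ b * dist y (x 0))
    {s t : ℝ} (hs : s ∈ Icc (-T) 0) {n : ℕ} (ht : t ∈ Icc (n * T) (n * T + T)) {y : X}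
    (hy : dist y (x s) ≤ r) (hCy : C * dist y (x s) ≤ r) :
    dist (φ t s y) (x t) ≤ C ^ 2 * b ^ n * dist y (x s) := by
  set z := φ 0 s y
  have hz : dist z (x 0) ≤ C * dist y (x s) :=
    hgrowth ⟨hs.2, neg_le_iff_add_nonneg.mp hs.1⟩ hy
  have hiter : dist (φ (n * T) 0 z) (x (n * T)) ≤ b ^ n * dist z (x 0) := by
    rw [hφ.apply_nat_mul_zero hT, hx.nat_mul_eq]
    exact dist_iterate_le_pow_mul hb₀ hb₁ hcontr (hz.trans hCy) n
  have hball : dist (φ (n * T) 0 z) (x (n * T)) ≤ r :=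
    (hiter.trans (mul_le_of_le_one_left dist_nonneg (pow_le_one₀ hb₀ hb₁))).trans (hz.trans hCy)
  have hnT : 0 ≤ n * T := by positivity
  calc dist (φ t s y) (x t) = dist (φ t (n * T) (φ (n * T) 0 z)) (x t) := by
        rw [hφ.comp _ _ _ _ hnT ht.1, hφ.comp _ _ _ _ hs.2 (hnT.trans ht.1)]
    _ ≤ C * dist (φ (n * T) 0 z) (x (n * T)) := hgrowth ht hball
    _ ≤ C * (b ^ n * (C * dist y (x s))) := by gcongr; exact hiter.trans (by gcongr)
    _ = C ^ 2 * b ^ n * dist y (x s) := by ring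

theorem exists_dist_le_of_mem_Ioc (hφ : IsPeriodicEvolution φ T) (hx : Periodic x T) (hT : 0 < T)
    (hC : 1 ≤ C) (hgrowth : HasGrowthBound φ x T C r) (hb₀ : 0 ≤ b) (hb₁ : b ≤ 1)
    (hcontr : ∀ y, dist y (x 0) ≤ r → dist (φ T 0 y) (x 0) ≤ b * dist y (x 0))
    {s t : ℝ} (hs : s ∈ Ioc (-T) 0) (hst : s ≤ t) {y : X} (hCy : C * dist y (x s) ≤ r) :
    ∃ n : ℕ, t - s ≤ (n + 2) * T ∧ dist (φ t s y) (x t) ≤ C ^ 2 * b ^ n * dist y (x s) := by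
  have hy : dist y (x s) ≤ r := (le_mul_of_one_le_left dist_nonneg hC).trans hCy
  rcases le_total t 0 with ht | ht
  · refine ⟨0, by rw [Nat.cast_zero]; linarith [hs.1], ?_⟩
    calc dist (φ t s y) (x t) ≤ C * dist y (x s) := hgrowth ⟨hst, by linarith [hs.1]⟩ hy
      _ ≤ C ^ 2 * b ^ 0 * dist y (x s) := by
        rw [pow_zero, mul_one]; gcongr; exact le_self_pow₀ hC two_ne_zero
  · set n := ⌊t / T⌋₊
    have hn : n * T ≤ t := (le_div_iff₀ hT).mp (Nat.floor_le (div_nonneg ht hT.le))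
    have hn' : t ≤ n * T + T := by
      simpa only [add_one_mul] using ((div_lt_iff₀ hT).mp (Nat.lt_floor_add_one _)).le
    exact ⟨n, by linarith [hs.1], hφ.dist_le_of_mem_Icc hx hT.le (zero_le_one.trans hC) hgrowth
      hb₀ hb₁ hcontr (Ioc_subset_Icc_self hs) ⟨hn, hn'⟩ hy hCy⟩

theorem dist_le_exp (hφ : IsPeriodicEvolution φ T) (hx : Periodic x T) (hT : 0 < T)
    (hC : 1 ≤ C) (hgrowth : HasGrowthBound φ x T C r) (hb₀ : 0 < b) (hb₁ : b ≤ 1)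
    (hcontr : ∀ y, dist y (x 0) ≤ r → dist (φ T 0 y) (x 0) ≤ b * dist y (x 0))
    {s t : ℝ} (hst : s ≤ t) {y : X} (hCy : C * dist y (x s) ≤ r) :
    dist (φ t s y) (x t) ≤ C ^ 2 / b ^ 2 * Real.exp (Real.log b * (t - s) / T) * dist y (x s) := by
  obtain ⟨k, hk, -⟩ := existsUnique_add_zsmul_mem_Ioc hT s (-T)
  rw [zsmul_eq_mul, neg_add_cancel] at hk
  have hxk (u : ℝ) : x (u + k * T) = x u := hx.int_mul k u
  obtain ⟨n, hn, hle⟩ := hφ.exists_dist_le_of_mem_Ioc hx hT hC hgrowth hb₀.le hb₁ hcontr hk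
    (add_le_add_left hst (k * T)) (y := y) (by rwa [hxk])
  rw [hφ.apply_add_int_mul hst, hxk, hxk] at hle
  rw [add_sub_add_right_eq_sub] at hn
  calc dist (φ t s y) (x t) ≤ C ^ 2 * b ^ n * dist y (x s) := hle
    _ ≤ C ^ 2 * (Real.exp (Real.log b * (t - s) / T) / b ^ 2) * dist y (x s) := by
      gcongr; exact pow_le_exp_log_mul_div_sq hb₀ hb₁ hT hn
    _ = C ^ 2 / b ^ 2 * Real.exp (Real.log b * (t - s) / T) * dist y (x s) := by ring

end IsPeriodicEvolution

theorem HasGrowthBound.mono {X : Type*} [PseudoMetricSpace X] {φ : ℝ → ℝ → X → X} {x : ℝ → X}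
    {T C r r' : ℝ} (h : HasGrowthBound φ x T C r) (hr : r' ≤ r) : HasGrowthBound φ x T C r' :=
  fun _ _ ht _ hy ↦ h ht (hy.trans hr)

theorem hasGrowthBound_of_forall_add {Y : Type*} [SeminormedAddCommGroup Y] {φ : ℝ → ℝ → Y → Y}
    {x : ℝ → Y} {T C r : ℝ}
    (hφ : ∀ s h, ‖h‖ ≤ r → ∀ t, s ≤ t → t ≤ s + T → ‖φ t s (x s + h) - x t‖ ≤ C * ‖h‖) :
    HasGrowthBound φ x T C r := by
  intro s t ht y hy
  rw [dist_eq_norm] at hy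
  simpa only [dist_eq_norm, add_sub_cancel] using hφ s (y - x s) hy t ht.1 ht.2

theorem periodic_orbit_locally_attracting_general {𝕜 Y : Type*} [NontriviallyNormedField 𝕜]
    [SeminormedAddCommGroup Y] [NormedSpace 𝕜 Y] {φ : ℝ → ℝ → Y → Y} {x : ℝ → Y} {T C r b : ℝ}
    (hT : 0 < T) (hφ : IsPeriodicEvolution φ T) (hx : Periodic x T)
    (hx_sol : ∀ s t, s ≤ t → φ t s (x s) = x t) (hC : 1 ≤ C) (hr : 0 < r)
    (hgrowth : HasGrowthBound φ x T C r) {V : Y →L[𝕜] Y} (hV : HasFDerivAt (φ T 0) V (x 0))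
    (hVb : ‖V‖ < b) (hb₁ : b ≤ 1) :
    ∃ δ > (0 : ℝ), ∃ D > (0 : ℝ), ∀ (s t : ℝ) (h : Y), s ≤ t → ‖h‖ ≤ δ →
      ‖φ t s (x s + h) - x t‖ ≤ D * Real.exp (Real.log b * (t - s) / T) * ‖h‖ := by
  have hb₀ : 0 < b := (norm_nonneg V).trans_lt hVb
  have hC₀ : 0 < C := zero_lt_one.trans_le hC
  have hfix : φ T 0 (x 0) = x 0 := by rw [hx_sol 0 T hT.le, hx.eq]
  obtain ⟨ρ, hρ, hcontr⟩ := Metric.nhds_basis_closedBall.eventually_iff.mp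
    (eventually_dist_le_mul_of_hasFDerivAt hV hVb)
  simp only [Metric.mem_closedBall, hfix] at hcontr
  refine ⟨min r ρ / C, by positivity, C ^ 2 / b ^ 2, by positivity, fun s t h hst hh ↦ ?_⟩
  have hdist : dist (x s + h) (x s) = ‖h‖ := by rw [dist_eq_norm, add_sub_cancel_left]
  rw [← dist_eq_norm, ← hdist]
  refine hφ.dist_le_exp hx hT hC (hgrowth.mono (min_le_left r ρ)) hb₀ hb₁
    (fun y hy ↦ hcontr (hy.trans (min_le_right r ρ))) hst ?_
  rwa [hdist, ← le_div_iff₀' hC₀]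

/-- Let `Y` be a real Banach space, `T̄ > 0`, and `φ` a process on `Y` that is
`T̄`-periodic in time.  Let `x : ℝ → Y` be a `T̄`-periodic solution of the process.  Assume:
(H1) there exist `C₁ ≥ 1` and `lam₁ > 0` such that for every `t₀`, every `h` with `‖h‖ ≤ lam₁`
and every `t ∈ [t₀, t₀ + T̄]`, `‖φ t t₀ (x t₀ + h) − x t‖ ≤ min (C₁‖h‖) 1`;
(H2) there exist a bounded linear operator `V : Y → Y` with `‖V‖ = a < 1` and constants
`C₃, lam₃ > 0` such that `‖φ T̄ 0 (x 0 + h) − x T̄ − V h‖ ≤ C₃‖h‖²` for `‖h‖ ≤ lam₃`.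
Then for every `ε > 0` with `a + ε < 1` there exist `δ > 0` and `D > 0` such that for all
`t₀`, all `t ≥ t₀` and all `h` with `‖h‖ ≤ δ`,
`‖φ t t₀ (x t₀ + h) − x t‖ ≤ D · exp(log(a+ε)(t−t₀)/T̄) · ‖h‖`. -/
theorem periodic_orbit_locally_attracting
    {Y : Type*} [NormedAddCommGroup Y] [NormedSpace ℝ Y] [CompleteSpace Y]
    (Tbar : ℝ) (hTbar : 0 < Tbar)
    (φ : ℝ → ℝ → Y → Y)
    (hφ_id : ∀ (t₀ : ℝ) (y : Y), φ t₀ t₀ y = y)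
    (hφ_comp : ∀ (r s t : ℝ) (y : Y), r ≤ s → s ≤ t → φ t s (φ s r y) = φ t r y)
    (hφ_per : ∀ (t₀ t : ℝ) (y : Y), t₀ ≤ t → φ (t + Tbar) (t₀ + Tbar) y = φ t t₀ y)
    (hφ_cont : ∀ (t₀ t : ℝ), t₀ ≤ t → Continuous (φ t t₀))
    (x : ℝ → Y)
    (hx_per : ∀ t : ℝ, x (t + Tbar) = x t)
    (hx_sol : ∀ (t₀ t : ℝ), t₀ ≤ t → φ t t₀ (x t₀) = x t)
    -- (H1)
    (C₁ lam₁ : ℝ) (hC₁ : 1 ≤ C₁) (hlam₁ : 0 < lam₁)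
    (hH1 : ∀ (t₀ : ℝ) (h : Y), ‖h‖ ≤ lam₁ → ∀ t : ℝ, t₀ ≤ t → t ≤ t₀ + Tbar →
      ‖φ t t₀ (x t₀ + h) - x t‖ ≤ min (C₁ * ‖h‖) 1)
    -- (H2)
    (V : Y →L[ℝ] Y) (a : ℝ) (ha : ‖V‖ = a) (ha1 : a < 1)
    (C₃ lam₃ : ℝ) (hC₃ : 0 < C₃) (hlam₃ : 0 < lam₃)
    (hH2 : ∀ h : Y, ‖h‖ ≤ lam₃ → ‖φ Tbar 0 (x 0 + h) - x Tbar - V h‖ ≤ C₃ * ‖h‖ ^ 2) :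
    ∀ ε : ℝ, 0 < ε → a + ε < 1 →
      ∃ δ > (0 : ℝ), ∃ D > (0 : ℝ), ∀ (t₀ t : ℝ) (h : Y), t₀ ≤ t → ‖h‖ ≤ δ →
        ‖φ t t₀ (x t₀ + h) - x t‖ ≤
          D * Real.exp (Real.log (a + ε) * (t - t₀) / Tbar) * ‖h‖ := by
  intro ε hε hb
  have hV : HasFDerivAt (φ Tbar 0) V (x 0) :=
    hasFDerivAt_of_norm_remainder_le_sq hlam₃ (by rwa [hx_sol 0 Tbar hTbar.le])
  have hgrowth : HasGrowthBound φ x Tbar C₁ lam₁ := hasGrowthBound_of_forall_add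
    fun s h hh t hst ht ↦ (hH1 s h hh t hst ht).trans (min_le_left _ _)
  exact periodic_orbit_locally_attracting_general hTbar ⟨hφ_id, hφ_comp, hφ_per⟩ hx_per hx_sol
    hC₁ hlam₁ hgrowth hV (by linarith) hb.le
end

section
/- In the abstract semilinear setting, for every initial time t₀ ∈ ℝ and every initial datum x⁰ ∈ Y there exists T > 0 such that there is exactly one mild solution x : [t₀, t₀ + T] → Y of x' = Lx + f(t, x) with x(t₀) = x⁰. -/
/-!
Mild solutions on `[t₀, t₀ + T]` are the fixed points of the Duhamel map. Near `x0` the nonlinearity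
is bounded and Lipschitz uniformly in time, and the integral term costs a factor `∫ r in 0..T, k r`,
where `k` dominates the kernel and is integrable at `0`. Since this factor tends to `0` with `T`,
for small `T` the Duhamel map contracts the continuous curves in a closed ball around `x0`, and maps
them into the open ball. Banach's theorem gives existence. A competing solution might leave the
ball, but as long as it has stayed inside, Duhamel's formula puts it in the open ball, so by
continuity there is no first exit time; contraction then gives uniqueness among all solutions.
-/

open MeasureTheory Set

/-- A mild (Duhamel) solution on `[t₀, t₀ + T]` with initial datum `x0` of the abstract
semilinear problem `x' = Lx + f(t,x)`, where `S` is the semigroup generated by `L` on `Y`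
and `T'` is its extension acting from `W` into `Y`:  a continuous function
`x : [t₀, t₀+T] → Y` satisfying `x t = S (t−t₀) x0 + ∫_{t₀}^t T' (t−s) (f s (x s)) ds`. -/
def IsMildSolution {Y W : Type*} [NormedAddCommGroup Y] [NormedSpace ℝ Y]
    [NormedAddCommGroup W] [NormedSpace ℝ W]
    (S : ℝ → Y →L[ℝ] Y) (T' : ℝ → W →L[ℝ] Y) (f : ℝ → Y → W)
    (t₀ T : ℝ) (x0 : Y) (x : ℝ → Y) : Prop :=
  ContinuousOn x (Set.Icc t₀ (t₀ + T)) ∧ x t₀ = x0 ∧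
    (∀ t ∈ Set.Icc t₀ (t₀ + T),
      IntervalIntegrable (fun s => T' (t - s) (f s (x s))) MeasureTheory.volume t₀ t) ∧
    ∀ t ∈ Set.Icc t₀ (t₀ + T),
      x t = S (t - t₀) x0 + ∫ s in t₀..t, T' (t - s) (f s (x s))

open Filter Function Metric Topology
open scoped NNReal

section FixedPoint

lemma mapsTo_Icc_of_forall_Ico {α β : Type*} [ConditionallyCompleteLinearOrder α]
    [TopologicalSpace α] [OrderTopology α] [TopologicalSpace β] {a b : α} {U : Set β} {x : α → β}
    (hU : IsOpen U) (hx : ContinuousOn x (Icc a b))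
    (h : ∀ t ∈ Icc a b, MapsTo x (Ico a t) U → x t ∈ U) : MapsTo x (Icc a b) U := by
  by_contra hnot
  obtain ⟨t₁, ht₁, hxt₁⟩ : ∃ t ∈ Icc a b, x t ∉ U := by
    simpa only [MapsTo, not_forall, exists_prop] using hnot
  have hcompact : IsCompact (Icc a b ∩ x ⁻¹' Uᶜ) :=
    isCompact_Icc.of_isClosed_subset
      (hx.preimage_isClosed_of_isClosed isClosed_Icc hU.isClosed_compl) inter_subset_left
  obtain ⟨t, ⟨ht, hxt⟩, hfirst⟩ := hcompact.exists_isLeast ⟨t₁, ht₁, hxt₁⟩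
  refine hxt (h t ht fun s hs => ?_)
  by_contra hxs
  exact hs.2.not_ge (hfirst ⟨⟨hs.1, hs.2.le.trans ht.2⟩, hxs⟩)

variable {Y : Type*} [MetricSpace Y] {a b R : ℝ} {c : Y} {q : ℝ} {D : (ℝ → Y) → ℝ → Y}

lemma exists_eqOn_of_contracting_Icc [CompleteSpace Y] (hab : a ≤ b) (hR : 0 ≤ R)
    (hcont : ∀ x, ContinuousOn x (Icc a b) → ContinuousOn (D x) (Icc a b))
    (hmaps : ∀ x, MapsTo x (Icc a b) (closedBall c R) → MapsTo (D x) (Icc a b) (closedBall c R))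
    (hq : q < 1)
    (hlip : ∀ x y, ContinuousOn x (Icc a b) → ContinuousOn y (Icc a b) →
      MapsTo x (Icc a b) (closedBall c R) → MapsTo y (Icc a b) (closedBall c R) →
      ∀ d, (∀ t ∈ Icc a b, dist (x t) (y t) ≤ d) → ∀ t ∈ Icc a b, dist (D x t) (D y t) ≤ q * d) :
    ∃ x, ContinuousOn x (Icc a b) ∧ EqOn x (D x) (Icc a b) := by
  let curve (x : C(Icc a b, Y)) : ℝ → Y := IccExtend hab x
  have curve_cont (x) : ContinuousOn (curve x) (Icc a b) := x.continuous.Icc_extend'.continuousOn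
  have curve_apply (x) {t} (ht : t ∈ Icc a b) : curve x t = x ⟨t, ht⟩ := IccExtend_of_mem hab x ht
  let Φ (x : C(Icc a b, Y)) : C(Icc a b, Y) := ⟨_, (hcont _ (curve_cont x)).domRestrict⟩
  let B : Set C(Icc a b, Y) := closedBall (.const _ c) R
  have curve_maps {x} (hx : x ∈ B) : MapsTo (curve x) (Icc a b) (closedBall c R) := fun t ht => by
    rw [curve_apply x ht]
    exact (ContinuousMap.dist_le hR).1 hx ⟨t, ht⟩
  have hΦB : MapsTo Φ B B := fun x hx =>
    (ContinuousMap.dist_le hR).2 fun t => hmaps _ (curve_maps hx) t.2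
  have hΦ : LipschitzOnWith q.toNNReal Φ B := .of_dist_le_mul fun x hx y hy =>
    (ContinuousMap.dist_le (by positivity)).2 fun t => calc
      dist (Φ x t) (Φ y t) ≤ q * dist x y :=
        hlip _ _ (curve_cont x) (curve_cont y) (curve_maps hx) (curve_maps hy) _ (fun s hs => by
          simpa only [curve_apply _ hs] using ContinuousMap.dist_apply_le_dist _) t t.2
      _ ≤ q.toNNReal * dist x y := by gcongr; exact Real.le_coe_toNNReal q
  obtain ⟨x, -, hx, -⟩ := ContractingWith.exists_fixedPoint' isClosed_closedBall.isComplete hΦB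
    ⟨Real.toNNReal_lt_one.2 hq, hΦ.mapsToRestrict hΦB⟩ (mem_closedBall_self hR) (edist_ne_top _ _)
  refine ⟨curve x, curve_cont x, fun t ht => ?_⟩
  rw [curve_apply x ht]
  exact congr($hx.symm ⟨t, ht⟩)

lemma eqOn_of_contracting_Icc {x y : ℝ → Y} (hx : ContinuousOn x (Icc a b))
    (hy : ContinuousOn y (Icc a b)) (hxD : EqOn x (D x) (Icc a b)) (hyD : EqOn y (D y) (Icc a b))
    (hq : q < 1)
    (hlip : ∀ d, (∀ t ∈ Icc a b, dist (x t) (y t) ≤ d) →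
      ∀ t ∈ Icc a b, dist (D x t) (D y t) ≤ q * d) : EqOn x y (Icc a b) := by
  intro t ht
  obtain ⟨t₁, ht₁, hmax⟩ :=
    isCompact_Icc.exists_isMaxOn ⟨t, ht⟩ (continuous_dist.comp_continuousOn (hx.prodMk hy))
  have hle : dist (x t₁) (y t₁) ≤ q * dist (x t₁) (y t₁) := by
    conv_lhs => rw [hxD ht₁, hyD ht₁]
    exact hlip _ hmax t₁ ht₁
  have hzero : dist (x t₁) (y t₁) ≤ 0 := by
    by_contra! hpos
    exact (mul_lt_of_lt_one_left hpos hq).not_ge hle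
  exact dist_le_zero.1 ((hmax ht).trans hzero)

end FixedPoint

section Kernel

variable {Y W : Type*} [NormedAddCommGroup Y] [NormedSpace ℝ Y]
  [NormedAddCommGroup W] [NormedSpace ℝ W]

/-- A convolution kernel on `(0, ∞)`, strongly continuous and dominated in operator norm by a
function `k` which is integrable up to the (possibly singular) endpoint `0`. -/
structure IsIntegrableKernel (T' : ℝ → W →L[ℝ] Y) (k : ℝ → ℝ) : Prop where
  continuousOn_apply : ∀ w, ContinuousOn (fun r => T' r w) (Ioi 0)
  norm_le : ∀ r, 0 < r → ‖T' r‖ ≤ k r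
  integrableOn : ∀ b, IntegrableOn k (Ioc 0 b)

/-- The convolution `∫ s in t₀..t, T' (t - s) (u s)` in Duhamel's formula, of an operator-valued
kernel `T'` with a forcing term `u`. -/
noncomputable def duhamelIntegral (T' : ℝ → W →L[ℝ] Y) (u : ℝ → W) (t₀ t : ℝ) : Y :=
  ∫ s in t₀..t, T' (t - s) (u s)

lemma aestronglyMeasurable_clm_apply {α : Type*} [TopologicalSpace α]
    [TopologicalSpace.MetrizableSpace α] [SecondCountableTopology α] [MeasurableSpace α]
    [OpensMeasurableSpace α] {μ : Measure α} {s : Set α} (hs : MeasurableSet s)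
    {L : α → W →L[ℝ] Y} {v : α → W}
    (hL : ∀ w, ContinuousOn (fun a => L a w) s) (hv : ContinuousOn v s) :
    AEStronglyMeasurable (fun a => L a (v a)) (μ.restrict s) := by
  -- `(b, a) ↦ L a (v b)` is a Carathéodory function; restrict it to the diagonal
  have huncurry : StronglyMeasurable (uncurry fun b a : s => L a (v b)) :=
    stronglyMeasurable_uncurry_of_continuous_of_stronglyMeasurable
      (fun a => (L a).continuous.comp hv.domRestrict)
      (fun b => (hL (v b)).domRestrict.stronglyMeasurable)
  have hdiag : StronglyMeasurable fun a : s => L a (v a) :=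
    huncurry.comp_measurable (measurable_id.prodMk measurable_id)
  rw [← map_comap_subtype_coe hs,
    (MeasurableEmbedding.subtype_coe hs).aestronglyMeasurable_map_iff]
  exact hdiag.aestronglyMeasurable

lemma intervalIntegrable_exp_mul_rpow (M κ : ℝ) {p : ℝ} (hp : -1 < p) (a b : ℝ) :
    IntervalIntegrable (fun r => M * Real.exp (κ * r) * r ^ p) volume a b :=
  (intervalIntegral.intervalIntegrable_rpow' hp).continuousOn_mul (by fun_prop)

lemma duhamelIntegral_eq_integral_sub (T' : ℝ → W →L[ℝ] Y) (u : ℝ → W) (t₀ t : ℝ) :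
    duhamelIntegral T' u t₀ t = ∫ r in 0..(t - t₀), T' r (u (t - r)) := by
  simpa [duhamelIntegral] using
    intervalIntegral.integral_comp_sub_left (a := t₀) (b := t) (fun r => T' r (u (t - r))) t

lemma isIntegrableKernel_of_norm_le_exp_mul_rpow {T' : ℝ → W →L[ℝ] Y} {M κ γ : ℝ} (hγ : γ < 1)
    (hbound : ∀ t : ℝ, 0 < t → ‖T' t‖ ≤ M * Real.exp (κ * t) * t ^ (-γ))
    (hcont : ∀ w : W, ContinuousOn (fun t => T' t w) (Ioi 0)) :
    IsIntegrableKernel T' fun t => M * Real.exp (κ * t) * t ^ (-γ) where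
  continuousOn_apply := hcont
  norm_le := hbound
  integrableOn b := (intervalIntegrable_exp_mul_rpow M κ (neg_lt_neg hγ) 0 b).1

namespace IsIntegrableKernel

variable {T' : ℝ → W →L[ℝ] Y} {k : ℝ → ℝ} {u v : ℝ → W} {a b t₀ t₁ t T K : ℝ}

lemma intervalIntegrable (h : IsIntegrableKernel T' k) (ha : 0 ≤ a) (hb : 0 ≤ b) :
    IntervalIntegrable k volume a b := by
  have (c : ℝ) (hc : 0 ≤ c) : IntervalIntegrable k volume 0 c :=
    (intervalIntegrable_iff_integrableOn_Ioc_of_le hc).2 (h.integrableOn c)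
  exact (this a ha).symm.trans (this b hb)

lemma monotoneOn_integral (h : IsIntegrableKernel T' k) :
    MonotoneOn (fun b => ∫ r in 0..b, k r) (Ici 0) := by
  intro a ha b hb hab
  refine intervalIntegral.integral_mono_interval le_rfl ha hab ?_ (h.intervalIntegrable le_rfl hb)
  exact ae_restrict_of_forall_mem measurableSet_Ioc fun r hr =>
    (norm_nonneg _).trans (h.norm_le r hr.1)

lemma tendsto_integral_zero (h : IsIntegrableKernel T' k) :
    Tendsto (fun b => ∫ r in 0..b, k r) (𝓝[≥] 0) (𝓝 0) := by
  have hcont := intervalIntegral.continuousOn_primitive_interval'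
    (h.intervalIntegrable le_rfl zero_le_one) left_mem_uIcc 0 left_mem_uIcc
  rw [uIcc_of_le zero_le_one, ContinuousWithinAt, intervalIntegral.integral_same,
    nhdsWithin_Icc_eq_nhdsGE one_pos] at hcont
  exact hcont

lemma norm_apply_le (h : IsIntegrableKernel T' k) {r : ℝ} (hr : 0 < r) {w : W} (hw : ‖w‖ ≤ K) :
    ‖T' r w‖ ≤ K * k r := by
  rw [mul_comm]
  exact (T' r).le_of_opNorm_le_of_le (h.norm_le r hr) hw

lemma intervalIntegrable_apply (h : IsIntegrableKernel T' k) (hb : 0 ≤ b)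
    (hv : ContinuousOn v (Icc 0 b)) : IntervalIntegrable (fun r => T' r (v r)) volume 0 b := by
  obtain ⟨K, hK⟩ := isCompact_Icc.exists_bound_of_continuousOn hv
  refine (intervalIntegrable_iff_integrableOn_Ioc_of_le hb).2 <|
    ((h.integrableOn b).const_mul K).mono' ?_ <|
      ae_restrict_of_forall_mem measurableSet_Ioc fun r hr =>
        h.norm_apply_le hr.1 (hK r (Ioc_subset_Icc_self hr))
  exact aestronglyMeasurable_clm_apply measurableSet_Ioc
    (fun w => (h.continuousOn_apply w).mono Ioc_subset_Ioi_self) (hv.mono Ioc_subset_Icc_self)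

lemma intervalIntegrable_duhamel (h : IsIntegrableKernel T' k) (ht : t₀ ≤ t)
    (hu : ContinuousOn u (Icc t₀ t)) :
    IntervalIntegrable (fun s => T' (t - s) (u s)) volume t₀ t := by
  have hv : ContinuousOn (fun r => u (t - r)) (Icc 0 (t - t₀)) :=
    hu.comp (by fun_prop) fun r hr => ⟨by linarith [hr.2], by linarith [hr.1]⟩
  simpa using ((h.intervalIntegrable_apply (sub_nonneg.2 ht) hv).comp_sub_left t).symm

lemma norm_duhamelIntegral_le (h : IsIntegrableKernel T' k) (ht : t ∈ Icc t₀ (t₀ + T)) (hK : 0 ≤ K)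
    (hu : ∀ s ∈ Ico t₀ t, ‖u s‖ ≤ K) :
    ‖duhamelIntegral T' u t₀ t‖ ≤ K * ∫ r in 0..T, k r := by
  have hτ : 0 ≤ t - t₀ := sub_nonneg.2 ht.1
  have hτT : t - t₀ ≤ T := sub_le_iff_le_add'.2 ht.2
  calc ‖duhamelIntegral T' u t₀ t‖
      = ‖∫ r in 0..(t - t₀), T' r (u (t - r))‖ := by rw [duhamelIntegral_eq_integral_sub]
    _ ≤ ∫ r in 0..(t - t₀), K * k r :=
        intervalIntegral.norm_integral_le_of_norm_le hτ
          (.of_forall fun r hr => h.norm_apply_le hr.1 <|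
            hu _ ⟨by linarith [hr.2], by linarith [hr.1]⟩)
          ((h.intervalIntegrable le_rfl hτ).const_mul K)
    _ = K * ∫ r in 0..(t - t₀), k r := intervalIntegral.integral_const_mul K k
    _ ≤ K * ∫ r in 0..T, k r := by
        gcongr
        exact h.monotoneOn_integral hτ (hτ.trans hτT) hτT

lemma duhamelIntegral_sub (h : IsIntegrableKernel T' k) (ht : t₀ ≤ t)
    (hu : ContinuousOn u (Icc t₀ t)) (hv : ContinuousOn v (Icc t₀ t)) :
    duhamelIntegral T' (u - v) t₀ t = duhamelIntegral T' u t₀ t - duhamelIntegral T' v t₀ t := by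
  simpa [duhamelIntegral] using intervalIntegral.integral_sub
    (h.intervalIntegrable_duhamel ht hu) (h.intervalIntegrable_duhamel ht hv)

lemma continuous_integral_apply_sub (h : IsIntegrableKernel T' k) (hb : 0 ≤ b) (hu : Continuous u)
    (hK : ∀ s, ‖u s‖ ≤ K) : Continuous fun t => ∫ r in 0..b, T' r (u (t - r)) := by
  have hmem {r : ℝ} (hr : r ∈ uIoc 0 b) : 0 < r := by
    rw [uIoc_of_le hb] at hr
    exact hr.1
  refine intervalIntegral.continuous_of_dominated_interval (bound := fun r => K * k r)
    (fun t => ?_) (fun t => ?_) ((h.intervalIntegrable le_rfl hb).const_mul K) ?_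
  · have hcont : ContinuousOn (fun r => u (t - r)) (Icc 0 b) := by fun_prop
    exact (h.intervalIntegrable_apply hb hcont).aestronglyMeasurable_restrict_uIoc
  · exact .of_forall fun r hr => h.norm_apply_le (hmem hr) (hK _)
  · exact .of_forall fun r _ => by fun_prop

/- Continuing `u` by the constant `u t₀` to the left of `t₀` makes the domain of integration
independent of `t`, at the price of a primitive of `r ↦ T' r (u t₀)`. -/
lemma duhamelIntegral_eq_integral_IccExtend_sub (h : IsIntegrableKernel T' k) (hle : t₀ ≤ t₁)
    (hu : ContinuousOn u (Icc t₀ t₁)) (ht : t ∈ Icc t₀ t₁) :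
    duhamelIntegral T' u t₀ t =
      (∫ r in 0..(t₁ - t₀), T' r (IccExtend hle (fun s => u s) (t - r))) -
        ∫ r in (t - t₀)..(t₁ - t₀), T' r (u t₀) := by
  set g : ℝ → W := IccExtend hle fun s => u s
  have hg : Continuous g := hu.domRestrict.Icc_extend'
  have hτ : 0 ≤ t - t₀ := sub_nonneg.2 ht.1
  have hττ : t - t₀ ≤ t₁ - t₀ := sub_le_sub_right ht.2 t₀
  have hint : IntervalIntegrable (fun r => T' r (g (t - r))) volume 0 (t₁ - t₀) :=
    h.intervalIntegrable_apply (hτ.trans hττ) (by fun_prop)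
  have hmem : t - t₀ ∈ uIcc 0 (t₁ - t₀) := by
    rw [uIcc_of_le (hτ.trans hττ)]
    exact ⟨hτ, hττ⟩
  have hnear : ∫ r in 0..(t - t₀), T' r (g (t - r)) = duhamelIntegral T' u t₀ t := by
    rw [duhamelIntegral_eq_integral_sub]
    refine intervalIntegral.integral_congr fun r hr => ?_
    rw [uIcc_of_le hτ] at hr
    simp only [g, IccExtend_of_mem hle (fun s => u s) (x := t - r)
      ⟨by linarith [hr.2], by linarith [hr.1, ht.2]⟩]
  have hfar : ∫ r in (t - t₀)..(t₁ - t₀), T' r (g (t - r)) =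
      ∫ r in (t - t₀)..(t₁ - t₀), T' r (u t₀) := by
    refine intervalIntegral.integral_congr fun r hr => ?_
    rw [uIcc_of_le hττ] at hr
    simp only [g, IccExtend_of_le_left hle (fun s => u s) (x := t - r) (by linarith [hr.1])]
  rw [← hfar, ← hnear, eq_sub_iff_add_eq]
  exact intervalIntegral.integral_add_adjacent_intervals
    (hint.mono_set (uIcc_subset_uIcc_left hmem)) (hint.mono_set (uIcc_subset_uIcc_right hmem))

lemma continuousOn_duhamelIntegral (h : IsIntegrableKernel T' k)
    (hu : ContinuousOn u (Icc t₀ t₁)) : ContinuousOn (duhamelIntegral T' u t₀) (Icc t₀ t₁) := by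
  rcases lt_or_ge t₁ t₀ with hlt | hle
  · simp [Icc_eq_empty_of_lt hlt]
  have hb : 0 ≤ t₁ - t₀ := sub_nonneg.2 hle
  obtain ⟨K, hK⟩ := isCompact_Icc.exists_bound_of_continuousOn hu
  have hfixed : Continuous fun t =>
      ∫ r in 0..(t₁ - t₀), T' r (IccExtend hle (fun s => u s) (t - r)) :=
    h.continuous_integral_apply_sub hb hu.domRestrict.Icc_extend'
      fun s => hK _ (projIcc t₀ t₁ hle s).2
  have hprimitive : ContinuousOn (fun τ => ∫ r in τ..(t₁ - t₀), T' r (u t₀))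
      (Icc 0 (t₁ - t₀)) := by
    rw [← uIcc_of_le hb]
    apply intervalIntegral.continuousOn_primitive_interval_left
    rw [uIcc_of_le hb, ← intervalIntegrable_iff_integrableOn_Icc_of_le hb]
    exact h.intervalIntegrable_apply hb continuousOn_const
  have hshift : MapsTo (fun t => t - t₀) (Icc t₀ t₁) (Icc 0 (t₁ - t₀)) := fun t ht =>
    ⟨sub_nonneg.2 ht.1, sub_le_sub_right ht.2 t₀⟩
  exact (hfixed.continuousOn.sub (hprimitive.comp (by fun_prop) hshift)).congr
    fun t ht => h.duhamelIntegral_eq_integral_IccExtend_sub hle hu ht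

end IsIntegrableKernel

end Kernel

lemma eventually_forall_Icc_add {p : ℝ → Prop} {a : ℝ} (hp : ∀ᶠ t in 𝓝[≥] a, p t) :
    ∀ᶠ T in 𝓝[>] 0, ∀ t ∈ Icc a (a + T), p t := by
  obtain ⟨b, hb, hsub⟩ := mem_nhdsGE_iff_exists_Icc_subset.1 hp
  filter_upwards [Ioo_mem_nhdsGT (sub_pos.2 hb)] with T hT t ht
  exact hsub ⟨ht.1, by linarith [ht.2, hT.2]⟩

lemma exists_mem_nhds_lipschitzOnWith {ι Y W : Type*} [SeminormedAddCommGroup Y]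
    [SeminormedAddCommGroup W] {f : ι → Y → W}
    (hf : ∀ R : ℝ, 0 < R → ∃ C > (0 : ℝ), ∀ (t : ι) (x y : Y),
      ‖x‖ ≤ R → ‖y‖ ≤ R → ‖f t x - f t y‖ ≤ C * ‖x - y‖) (x0 : Y) :
    ∃ C : ℝ≥0, ∃ s ∈ 𝓝 x0, ∀ t, LipschitzOnWith C (f t) s := by
  obtain ⟨C, hC, hlip⟩ := hf (‖x0‖ + 1) (by positivity)
  have hnorm {y : Y} (hy : y ∈ closedBall x0 1) : ‖y‖ ≤ ‖x0‖ + 1 := norm_le_of_mem_closedBall hy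
  refine ⟨⟨C, hC.le⟩, closedBall x0 1, closedBall_mem_nhds x0 one_pos, fun t =>
    .of_dist_le_mul fun x hx y hy => ?_⟩
  rw [dist_eq_norm, dist_eq_norm]
  exact hlip t x y (hnorm hx) (hnorm hy)

/-- The smallness conditions on a length of time `T` under which the Duhamel map, for a kernel
dominated by `k`, is a contraction on the curves `[t₀, t₀ + T] → closedBall x0 R`. The inequality in
`dist_add_lt` is strict so that curves in the image stay in the open ball. -/
structure IsContractionTime {Y W : Type*} [PseudoMetricSpace Y] [SeminormedAddCommGroup W]
    (k : ℝ → ℝ) (g : ℝ → Y) (f : ℝ → Y → W) (t₀ : ℝ) (x0 : Y) (R : ℝ) (K C : ℝ≥0) (T : ℝ) :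
    Prop where
  nonneg : 0 ≤ T
  norm_le : ∀ t ∈ Icc t₀ (t₀ + T), ∀ y ∈ closedBall x0 R, ‖f t y‖ ≤ K
  lipschitzOnWith : ∀ t ∈ Icc t₀ (t₀ + T), LipschitzOnWith C (f t) (closedBall x0 R)
  dist_add_lt : ∀ t ∈ Icc t₀ (t₀ + T), dist (g t) x0 + K * ∫ r in 0..T, k r < R
  mul_lt_one : C * ∫ r in 0..T, k r < 1

section DuhamelMap

variable {Y W : Type*} [NormedAddCommGroup Y] [NormedSpace ℝ Y]
  [NormedAddCommGroup W] [NormedSpace ℝ W]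

/-- The right-hand side `g t + ∫ s in t₀..t, T' (t - s) (f s (x s))` of Duhamel's formula, as a map
on curves `x`. The free term `g` stands for the orbit `t ↦ S (t - t₀) x0`. -/
noncomputable def duhamelMap (g : ℝ → Y) (T' : ℝ → W →L[ℝ] Y) (f : ℝ → Y → W) (t₀ : ℝ)
    (x : ℝ → Y) (t : ℝ) : Y :=
  g t + duhamelIntegral T' (fun s => f s (x s)) t₀ t

variable {S : ℝ → Y →L[ℝ] Y} {T' : ℝ → W →L[ℝ] Y} {k : ℝ → ℝ} {g : ℝ → Y} {f : ℝ → Y → W}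
  {t₀ t₁ t T R : ℝ} {x0 : Y} {x y : ℝ → Y} {K C : ℝ≥0}

lemma exists_isContractionTime (hT' : IsIntegrableKernel T' k)
    (hg : ContinuousWithinAt g (Ici t₀) t₀) (hg₀ : g t₀ = x0)
    (hf : ContinuousAt (fun p : ℝ × Y => f p.1 p.2) (t₀, x0))
    (hlip : ∃ C : ℝ≥0, ∃ s ∈ 𝓝 x0, ∀ᶠ t in 𝓝[≥] t₀, LipschitzOnWith C (f t) s) :
    ∃ R K C T, 0 < T ∧ IsContractionTime k g f t₀ x0 R K C T := by
  obtain ⟨C, s, hs, hlip⟩ := hlip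
  let K : ℝ≥0 := ‖f t₀ x0‖₊ + 1
  have hbound : ∀ᶠ p : ℝ × Y in 𝓝 t₀ ×ˢ 𝓝 x0, ‖f p.1 p.2‖ ≤ K := by
    rw [← nhds_prod_eq]
    exact hf.norm.eventually_le_const (by simp [K])
  obtain ⟨pt, hpt, py, hpy, hbound⟩ := eventually_prod_iff.1 hbound
  obtain ⟨R, hR, hball⟩ := nhds_basis_closedBall.mem_iff.1 (inter_mem hs hpy)
  have hmass : Tendsto (fun T => ∫ r in 0..T, k r) (𝓝[>] 0) (𝓝 0) :=
    hT'.tendsto_integral_zero.mono_left (nhdsWithin_mono 0 Ioi_subset_Ici_self)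
  have hdist : ∀ᶠ t in 𝓝[≥] t₀, dist (g t) x0 < R / 2 := by
    refine (hg.dist continuousWithinAt_const).eventually_lt_const ?_
    simpa [hg₀] using hR
  have hK : ∀ᶠ T in 𝓝[>] 0, K * ∫ r in 0..T, k r < R / 2 :=
    (hmass.const_mul (K : ℝ)).eventually_lt_const (by simpa using hR)
  have hC : ∀ᶠ T in 𝓝[>] 0, C * ∫ r in 0..T, k r < 1 :=
    (hmass.const_mul (C : ℝ)).eventually_lt_const (by simp)
  obtain ⟨T, hT, hptT, hlipT, hdistT, hKT, hCT⟩ := (eventually_mem_nhdsWithin.and <|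
    (eventually_forall_Icc_add (hpt.filter_mono nhdsWithin_le_nhds)).and <|
    (eventually_forall_Icc_add hlip).and <| (eventually_forall_Icc_add hdist).and <|
    hK.and hC).exists
  exact ⟨R, K, C, T, hT,
    { nonneg := hT.le
      norm_le := fun t ht y hy => hbound (hptT t ht) (hball hy).2
      lipschitzOnWith := fun t ht => (hlipT t ht).mono fun y hy => (hball hy).1
      dist_add_lt := fun t ht => by linarith [hdistT t ht]
      mul_lt_one := hCT }⟩

lemma continuousOn_duhamelMap (hT' : IsIntegrableKernel T' k)
    (hf : Continuous fun p : ℝ × Y => f p.1 p.2) (hg : ContinuousOn g (Icc t₀ t₁))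
    (hx : ContinuousOn x (Icc t₀ t₁)) :
    ContinuousOn (duhamelMap g T' f t₀ x) (Icc t₀ t₁) :=
  hg.add (hT'.continuousOn_duhamelIntegral (hf.comp_continuousOn (continuousOn_id.prodMk hx)))

lemma duhamelMap_sub_duhamelMap (hT' : IsIntegrableKernel T' k)
    (hf : Continuous fun p : ℝ × Y => f p.1 p.2) (ht : t₀ ≤ t)
    (hx : ContinuousOn x (Icc t₀ t)) (hy : ContinuousOn y (Icc t₀ t)) :
    duhamelMap g T' f t₀ x t - duhamelMap g T' f t₀ y t =
      duhamelIntegral T' (fun s => f s (x s) - f s (y s)) t₀ t := by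
  rw [duhamelMap, duhamelMap, add_sub_add_left_eq_sub]
  exact (hT'.duhamelIntegral_sub ht (hf.comp_continuousOn (continuousOn_id.prodMk hx))
    (hf.comp_continuousOn (continuousOn_id.prodMk hy))).symm

namespace IsContractionTime

lemma duhamelMap_mem_ball (h : IsContractionTime k g f t₀ x0 R K C T)
    (hT' : IsIntegrableKernel T' k) (ht : t ∈ Icc t₀ (t₀ + T))
    (hx : MapsTo x (Ico t₀ t) (closedBall x0 R)) : duhamelMap g T' f t₀ x t ∈ ball x0 R := by
  have hint : ‖duhamelIntegral T' (fun s => f s (x s)) t₀ t‖ ≤ K * ∫ r in 0..T, k r :=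
    hT'.norm_duhamelIntegral_le ht K.2 fun s hs =>
      h.norm_le s ⟨hs.1, hs.2.le.trans ht.2⟩ _ (hx hs)
  calc dist (duhamelMap g T' f t₀ x t) x0
      ≤ dist (duhamelMap g T' f t₀ x t) (g t) + dist (g t) x0 := dist_triangle _ _ _
    _ = ‖duhamelIntegral T' (fun s => f s (x s)) t₀ t‖ + dist (g t) x0 := by
        rw [duhamelMap, dist_self_add_left]
    _ ≤ dist (g t) x0 + K * ∫ r in 0..T, k r := by linarith
    _ < R := h.dist_add_lt t ht

lemma dist_duhamelMap_le (h : IsContractionTime k g f t₀ x0 R K C T)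
    (hT' : IsIntegrableKernel T' k) (hf : Continuous fun p : ℝ × Y => f p.1 p.2)
    (hx : ContinuousOn x (Icc t₀ (t₀ + T))) (hy : ContinuousOn y (Icc t₀ (t₀ + T)))
    (hxR : MapsTo x (Icc t₀ (t₀ + T)) (closedBall x0 R))
    (hyR : MapsTo y (Icc t₀ (t₀ + T)) (closedBall x0 R)) {d : ℝ}
    (hd : ∀ s ∈ Icc t₀ (t₀ + T), dist (x s) (y s) ≤ d) (ht : t ∈ Icc t₀ (t₀ + T)) :
    dist (duhamelMap g T' f t₀ x t) (duhamelMap g T' f t₀ y t) ≤ (C * ∫ r in 0..T, k r) * d := by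
  have hd₀ : 0 ≤ d := dist_nonneg.trans (hd t ht)
  have hsub : Icc t₀ t ⊆ Icc t₀ (t₀ + T) := Icc_subset_Icc_right ht.2
  rw [dist_eq_norm, duhamelMap_sub_duhamelMap hT' hf ht.1 (hx.mono hsub) (hy.mono hsub),
    mul_right_comm]
  refine hT'.norm_duhamelIntegral_le ht (by positivity) fun s hs => ?_
  have hs' : s ∈ Icc t₀ (t₀ + T) := hsub (Ico_subset_Icc_self hs)
  calc ‖f s (x s) - f s (y s)‖ ≤ C * dist (x s) (y s) := by
        rw [← dist_eq_norm]
        exact (h.lipschitzOnWith s hs').dist_le_mul _ (hxR hs') _ (hyR hs')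
    _ ≤ C * d := by gcongr; exact hd s hs'

lemma mapsTo_closedBall_of_eqOn (h : IsContractionTime k g f t₀ x0 R K C T)
    (hT' : IsIntegrableKernel T' k) (hx : ContinuousOn x (Icc t₀ (t₀ + T)))
    (hfix : EqOn x (duhamelMap g T' f t₀ x) (Icc t₀ (t₀ + T))) :
    MapsTo x (Icc t₀ (t₀ + T)) (closedBall x0 R) := by
  suffices hball : MapsTo x (Icc t₀ (t₀ + T)) (ball x0 R) from
    hball.mono_right ball_subset_closedBall
  refine mapsTo_Icc_of_forall_Ico isOpen_ball hx fun t ht hpast => ?_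
  rw [hfix ht]
  exact h.duhamelMap_mem_ball hT' ht (hpast.mono_right ball_subset_closedBall)

lemma exists_eqOn_duhamelMap [CompleteSpace Y] (h : IsContractionTime k g f t₀ x0 R K C T)
    (hT' : IsIntegrableKernel T' k) (hf : Continuous fun p : ℝ × Y => f p.1 p.2)
    (hg : ContinuousOn g (Icc t₀ (t₀ + T))) :
    ∃ x, ContinuousOn x (Icc t₀ (t₀ + T)) ∧
      EqOn x (duhamelMap g T' f t₀ x) (Icc t₀ (t₀ + T)) := by
  have hle : t₀ ≤ t₀ + T := le_add_of_nonneg_right h.nonneg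
  have hR : 0 ≤ R :=
    (dist_nonneg.trans_lt <|
      h.duhamelMap_mem_ball (x := fun _ => x0) hT' (left_mem_Icc.2 hle) <| by
        simp only [Ico_self, mapsTo_empty]).le
  exact exists_eqOn_of_contracting_Icc hle hR (fun x => continuousOn_duhamelMap hT' hf hg)
    (fun x hx t ht => ball_subset_closedBall <| h.duhamelMap_mem_ball hT' ht <|
      hx.mono_left fun s hs => ⟨hs.1, hs.2.le.trans ht.2⟩)
    h.mul_lt_one
    (fun x y hx hy hxR hyR d hd t ht => h.dist_duhamelMap_le hT' hf hx hy hxR hyR hd ht)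

lemma eqOn_of_eqOn_duhamelMap (h : IsContractionTime k g f t₀ x0 R K C T)
    (hT' : IsIntegrableKernel T' k) (hf : Continuous fun p : ℝ × Y => f p.1 p.2)
    (hx : ContinuousOn x (Icc t₀ (t₀ + T))) (hy : ContinuousOn y (Icc t₀ (t₀ + T)))
    (hxfix : EqOn x (duhamelMap g T' f t₀ x) (Icc t₀ (t₀ + T)))
    (hyfix : EqOn y (duhamelMap g T' f t₀ y) (Icc t₀ (t₀ + T))) :
    EqOn x y (Icc t₀ (t₀ + T)) :=
  eqOn_of_contracting_Icc hx hy hxfix hyfix h.mul_lt_one fun _ hd _ ht =>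
    h.dist_duhamelMap_le hT' hf hx hy (h.mapsTo_closedBall_of_eqOn hT' hx hxfix)
      (h.mapsTo_closedBall_of_eqOn hT' hy hyfix) hd ht

end IsContractionTime

lemma isMildSolution_iff_eqOn_duhamelMap (hT' : IsIntegrableKernel T' k)
    (hf : Continuous fun p : ℝ × Y => f p.1 p.2) (hS0 : S 0 x0 = x0) (hT : 0 ≤ T) :
    IsMildSolution S T' f t₀ T x0 x ↔ ContinuousOn x (Icc t₀ (t₀ + T)) ∧
      EqOn x (duhamelMap (fun t => S (t - t₀) x0) T' f t₀ x) (Icc t₀ (t₀ + T)) := by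
  refine ⟨fun ⟨hx, _, _, hfix⟩ => ⟨hx, hfix⟩, fun ⟨hx, hfix⟩ => ⟨hx, ?_, fun t ht => ?_, hfix⟩⟩
  · rw [hfix (left_mem_Icc.2 (le_add_of_nonneg_right hT))]
    simp [duhamelMap, duhamelIntegral, hS0]
  · exact hT'.intervalIntegrable_duhamel ht.1 <| hf.comp_continuousOn <|
      continuousOn_id.prodMk (hx.mono (Icc_subset_Icc_right ht.2))

end DuhamelMap

theorem exists_unique_local_mild_solution_general {Y W : Type*} [NormedAddCommGroup Y]
    [NormedSpace ℝ Y] [CompleteSpace Y] [NormedAddCommGroup W] [NormedSpace ℝ W]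
    {S : ℝ → Y →L[ℝ] Y}
    (hS0 : S 0 = ContinuousLinearMap.id ℝ Y)
    (hS_cont : ∀ y : Y, ContinuousOn (fun t => S t y) (Ici 0))
    {T' : ℝ → W →L[ℝ] Y} {k : ℝ → ℝ} (hT' : IsIntegrableKernel T' k) {f : ℝ → Y → W}
    (hf_cont : Continuous fun p : ℝ × Y => f p.1 p.2)
    {t₀ : ℝ} {x0 : Y}
    (hf_lip : ∃ C : ℝ≥0, ∃ s ∈ 𝓝 x0, ∀ᶠ t in 𝓝[≥] t₀, LipschitzOnWith C (f t) s) :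
    ∃ T > (0 : ℝ), ∃ x : ℝ → Y, IsMildSolution S T' f t₀ T x0 x ∧
      ∀ y : ℝ → Y, IsMildSolution S T' f t₀ T x0 y → EqOn y x (Icc t₀ (t₀ + T)) := by
  have hS0x : S 0 x0 = x0 := by simp [hS0]
  have horbit : ContinuousOn (fun t => S (t - t₀) x0) (Ici t₀) :=
    (hS_cont x0).comp (f := fun t => t - t₀) (by fun_prop) fun t ht =>
      mem_Ici.2 (sub_nonneg.2 ht)
  obtain ⟨R, K, C, T, hT, h⟩ := exists_isContractionTime hT' (horbit t₀ self_mem_Ici)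
    (by simpa using hS0x) hf_cont.continuousAt hf_lip
  have hmild (x : ℝ → Y) :=
    isMildSolution_iff_eqOn_duhamelMap (t₀ := t₀) (x := x) hT' hf_cont hS0x hT.le
  obtain ⟨x, hx, hxfix⟩ := h.exists_eqOn_duhamelMap hT' hf_cont (horbit.mono Icc_subset_Ici_self)
  refine ⟨T, hT, x, (hmild x).2 ⟨hx, hxfix⟩, fun y hy => ?_⟩
  obtain ⟨hy, hyfix⟩ := (hmild y).1 hy
  exact h.eqOn_of_eqOn_duhamelMap hT' hf_cont hy hx hyfix hxfix

/-- In the abstract semilinear setting, for every initial time `t₀ ∈ ℝ` and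
every initial datum `x0 ∈ Y` there exists `T > 0` such that there is exactly one mild
solution `x : [t₀, t₀ + T] → Y` of `x' = Lx + f(t,x)` with `x(t₀) = x0`. -/
theorem exists_unique_local_mild_solution
    {Y W : Type*} [NormedAddCommGroup Y] [NormedSpace ℝ Y] [CompleteSpace Y]
    [NormedAddCommGroup W] [NormedSpace ℝ W] [CompleteSpace W]
    (J : Y →L[ℝ] W) (hJ : Function.Injective J)
    (S : ℝ → Y →L[ℝ] Y)
    (hS0 : S 0 = ContinuousLinearMap.id ℝ Y)
    (hS_semigroup : ∀ s t : ℝ, 0 ≤ s → 0 ≤ t → S (t + s) = (S t).comp (S s))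
    (hS_cont : ∀ y : Y, ContinuousOn (fun t => S t y) (Set.Ici (0 : ℝ)))
    (M₁ κ₁ : ℝ) (hM₁ : 0 < M₁) (hκ₁ : 0 < κ₁)
    (hS_bound : ∀ t : ℝ, 0 ≤ t → ‖S t‖ ≤ M₁ * Real.exp (κ₁ * t))
    (T' : ℝ → W →L[ℝ] Y)
    (hT'J : ∀ t : ℝ, 0 < t → (T' t).comp J = S t)
    (hT'S : ∀ s t : ℝ, 0 < s → 0 < t → T' (t + s) = (S t).comp (T' s))
    (M₂ κ₂ γ : ℝ) (hM₂ : 0 < M₂) (hκ₂ : 0 < κ₂) (hγ0 : 0 ≤ γ) (hγ1 : γ < 1)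
    (hT'_bound : ∀ t : ℝ, 0 < t → ‖T' t‖ ≤ M₂ * Real.exp (κ₂ * t) * t ^ (-γ))
    (hT'_cont : ∀ w : W, ContinuousOn (fun t => T' t w) (Set.Ioi (0 : ℝ)))
    (f : ℝ → Y → W)
    (hf_cont : Continuous fun p : ℝ × Y => f p.1 p.2)
    (hf_lip : ∀ R : ℝ, 0 < R → ∃ C > (0 : ℝ), ∀ (t : ℝ) (x y : Y),
      ‖x‖ ≤ R → ‖y‖ ≤ R → ‖f t x - f t y‖ ≤ C * ‖x - y‖) :
    ∀ (t₀ : ℝ) (x0 : Y), ∃ T > (0 : ℝ), ∃ x : ℝ → Y,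
      IsMildSolution S T' f t₀ T x0 x ∧
        ∀ y : ℝ → Y, IsMildSolution S T' f t₀ T x0 y →
          Set.EqOn y x (Set.Icc t₀ (t₀ + T)) := by
  intro t₀ x0
  obtain ⟨C, s, hs, hlip⟩ := exists_mem_nhds_lipschitzOnWith hf_lip x0
  exact exists_unique_local_mild_solution_general hS0 hS_cont
    (isIntegrableKernel_of_norm_le_exp_mul_rpow hγ1 hT'_bound hT'_cont) hf_cont
    ⟨C, s, hs, .of_forall hlip⟩
end

section
/- Consider the non-autonomous linear problem z' = Lz + A(t)z, z(t₀) = z⁰, where A : [t₀, t₀ + T] → L(Y; W) is continuous. Then for every z⁰ ∈ Y there exists a unique continuous z : [t₀, t₀ + T] → Y satisfying z(t) = S_{t−t₀} z⁰ + ∫_{t₀}^t T_{t−s}(A(s) z(s)) ds for all t ∈ [t₀, t₀ + T]. Moreover, for each t ∈ [t₀, t₀ + T] the solution operator J(t, t₀) : Y → Y defined by J(t, t₀) z⁰ = z(t) is a bounded linear operator. -/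
open MeasureTheory Set

/-!
On `C([t₀, t₀ + T], Y)` the equation reads `(1 - K) z = F z⁰`, with `F z⁰` the free evolution and
`K` the Volterra operator `z ↦ ∫ T' (t - s) (A s (z s)) ds`, so it is enough to invert `1 - K`.
Conjugating `K` by multiplication with `exp (c * t)` replaces the kernel `T' r` by
`exp (-c * r) • T' r`, whose `L¹` bound tends to `0` as `c → ∞`, singular or not. For `c` large
the conjugate has norm less than `1` and the Neumann series applies. Then `(1 - K)⁻¹ ∘ F`
followed by evaluation at `t` is the solution operator, linear and bounded by construction.
-/

open Filter Topology

section Measurability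

variable {α Y W : Type*} [MeasurableSpace α] {μ : Measure α}
  [NormedAddCommGroup Y] [NormedSpace ℝ Y] [NormedAddCommGroup W] [NormedSpace ℝ W]

/- Approximating `g` by simple functions reduces the claim to constant `g`. -/
lemma aestronglyMeasurable_clm_apply_s4 {P : α → W →L[ℝ] Y} {g : α → W}
    (hP : ∀ w, AEStronglyMeasurable (fun x => P x w) μ) (hg : AEStronglyMeasurable g μ) :
    AEStronglyMeasurable (fun x => P x (g x)) μ := by
  have simple : ∀ f : SimpleFunc α W, AEStronglyMeasurable (fun x => P x (f x)) μ := by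
    intro f
    induction f using SimpleFunc.induction' with
    | const w => exact hP w
    | @pcw f₁ f₂ s hs h₁ h₂ =>
      classical
      simp only [SimpleFunc.piecewise_apply, apply_ite]
      exact (h₁.restrict).piecewise hs h₂.restrict
  have approx : AEStronglyMeasurable (fun x => P x (hg.mk g x)) μ :=
    aestronglyMeasurable_of_tendsto_ae atTop (fun n => simple (hg.stronglyMeasurable_mk.approx n))
      (ae_of_all _ fun x => ((P x).continuous.tendsto _).comp
        (hg.stronglyMeasurable_mk.tendsto_approx x))
  exact approx.congr (hg.ae_eq_mk.mono fun x hx => by simp only [hx])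

end Measurability

section Damping

variable {E : Type*} [NormedAddCommGroup E] [NormedSpace ℝ E]

lemma tendsto_setIntegral_exp_neg_mul_smul_atTop {k : ℝ → E} {s : Set ℝ} (hs : MeasurableSet s)
    (hpos : s ⊆ Ioi 0) (hk : IntegrableOn k s) :
    Tendsto (fun c : ℝ => ∫ r in s, Real.exp (-c * r) • k r) atTop (𝓝 0) := by
  rw [← integral_zero ℝ E (μ := volume.restrict s)]
  refine tendsto_integral_filter_of_dominated_convergence (fun r => ‖k r‖) ?_ ?_ hk.norm ?_
  · exact .of_forall fun c => (by fun_prop : AEStronglyMeasurable _ _).smul hk.1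
  · filter_upwards [eventually_ge_atTop 0] with c hc
    filter_upwards [ae_restrict_mem hs] with r hr
    rw [norm_smul, Real.norm_eq_abs, Real.abs_exp]
    refine mul_le_of_le_one_left (norm_nonneg _) (Real.exp_le_one_iff.2 ?_)
    exact mul_nonpos_of_nonpos_of_nonneg (neg_nonpos.2 hc) (hpos hr).le
  · filter_upwards [ae_restrict_mem hs] with r hr
    have hexp : Tendsto (fun c : ℝ => Real.exp (-c * r)) atTop (𝓝 0) :=
      Real.tendsto_exp_atBot.comp (tendsto_neg_atTop_atBot.atBot_mul_const (hpos hr))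
    simpa using hexp.smul_const (k r)

end Damping

section FixedPoint

lemma isUnit_one_sub_of_norm_conj_lt_one {R : Type*} [NormedRing R] [HasSummableGeomSeries R]
    {x : R} (u : Rˣ) (h : ‖↑u⁻¹ * x * u‖ < 1) : IsUnit (1 - x) := by
  have hconj : ↑u⁻¹ * (1 - x) * ↑u = 1 - ↑u⁻¹ * x * ↑u := by
    rw [mul_sub, sub_mul, mul_one, Units.inv_mul]
  have := isUnit_one_sub_of_norm_lt_one h
  rwa [← hconj, Units.isUnit_mul_units, Units.isUnit_units_mul] at this

lemma exists_clm_forall_eq_add_iff {Z E : Type*} [NormedAddCommGroup Z] [NormedSpace ℝ Z]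
    [NormedAddCommGroup E] [NormedSpace ℝ E] (F : Z →L[ℝ] E) {K : E →L[ℝ] E}
    (hK : IsUnit (1 - K)) : ∃ R : Z →L[ℝ] E, ∀ z v, v = F z + K v ↔ v = R z := by
  obtain ⟨u, hu⟩ := hK
  let e := ContinuousLinearEquiv.unitsEquiv ℝ E u
  have he : ∀ v, e v = v - K v := fun v => congrArg (fun L : E →L[ℝ] E => L v) hu
  exact ⟨e.symm ∘L F, fun z v => by
    rw [← sub_eq_iff_eq_add, ← he, ContinuousLinearMap.comp_apply,
      ContinuousLinearEquiv.coe_coe, e.eq_symm_apply]⟩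

end FixedPoint

section PointwiseApply

variable {X Y Z : Type*} [TopologicalSpace X] [CompactSpace X] [NormedAddCommGroup Y]
  [NormedSpace ℝ Y] [CompleteSpace Y] [NormedAddCommGroup Z] [NormedSpace ℝ Z]
  {B : X → Y →L[ℝ] Z}

lemma exists_opNorm_le_of_forall_continuous (hB : ∀ y, Continuous fun x => B x y) :
    ∃ C, ∀ x, ‖B x‖ ≤ C :=
  banach_steinhaus fun y =>
    let ⟨C, hC⟩ := isCompact_univ.exists_bound_of_continuousOn (hB y).continuousOn
    ⟨C, fun x => hC x (mem_univ x)⟩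

lemma continuous_clm_apply_of_forall_continuous (hB : ∀ y, Continuous fun x => B x y)
    {v : X → Y} (hv : Continuous v) : Continuous fun x => B x (v x) := by
  obtain ⟨C, hC⟩ := exists_opNorm_le_of_forall_continuous hB
  refine continuous_iff_continuousAt.2 fun x₀ => ?_
  have hincr : Tendsto (fun x => C * ‖v x - v x₀‖) (𝓝 x₀) (𝓝 0) :=
    Continuous.tendsto' (by fun_prop) _ _ (by simp)
  have hsub : Tendsto (fun x => B x (v x - v x₀)) (𝓝 x₀) (𝓝 0) :=
    squeeze_zero_norm (fun x => (B x).le_of_opNorm_le (hC x) _) hincr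
  simpa [ContinuousAt] using hsub.add ((hB (v x₀)).tendsto x₀)

/-- The multiplication operator `v ↦ (x ↦ B x (v x))` from `C(X, Y)` to `C(X, Z)` attached to a
strongly continuous operator family `B` on a compact space; Banach–Steinhaus makes it bounded. -/
noncomputable def pointwiseApply (B : X → Y →L[ℝ] Z) (hB : ∀ y, Continuous fun x => B x y) :
    C(X, Y) →L[ℝ] C(X, Z) :=
  LinearMap.mkContinuousOfExistsBound
    { toFun := fun v => ⟨fun x => B x (v x),
        continuous_clm_apply_of_forall_continuous hB v.continuous⟩
      map_add' := fun v w => by ext x; exact map_add (B x) _ _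
      map_smul' := fun c v => by ext x; exact map_smul (B x) _ _ } <| by
    obtain ⟨C, hC⟩ := exists_opNorm_le_of_forall_continuous hB
    refine ⟨max C 0, fun v => (ContinuousMap.norm_le _ (by positivity)).2 fun x => ?_⟩
    exact (B x).le_of_opNorm_le_of_le ((hC x).trans (le_max_left _ _)) (v.norm_coe_le_norm x)

@[simp]
lemma pointwiseApply_apply (hB : ∀ y, Continuous fun x => B x y) (v : C(X, Y)) (x : X) :
    pointwiseApply B hB v x = B x (v x) :=
  rfl

end PointwiseApply

section Convolution

variable {Y W : Type*} [NormedAddCommGroup Y] [NormedSpace ℝ Y]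
  [NormedAddCommGroup W] [NormedSpace ℝ W] {P : ℝ → W →L[ℝ] Y} {k : ℝ → ℝ}
  {g : ℝ → W} {C t₀ t T : ℝ}

/- The domain of integration no longer depends on `t`, which makes dominated convergence
available. -/
lemma intervalIntegral_convolution_eq_setIntegral (P : ℝ → W →L[ℝ] Y) (g : ℝ → W)
    (ht : t ∈ Icc t₀ (t₀ + T)) :
    ∫ s in t₀..t, P (t - s) (g s) =
      ∫ r in Ioc 0 T, (Iic (t - t₀)).indicator (fun r => P r (g (t - r))) r := by
  calc ∫ s in t₀..t, P (t - s) (g s)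
      = ∫ r in (0)..(t - t₀), P r (g (t - r)) := by
        simpa using intervalIntegral.integral_comp_sub_left (a := t₀) (b := t)
          (fun r => P r (g (t - r))) t
    _ = ∫ r in Ioc 0 T ∩ Iic (t - t₀), P r (g (t - r)) := by
        rw [intervalIntegral.integral_of_le (sub_nonneg.2 ht.1), Ioc_inter_Iic,
          min_eq_right (sub_le_iff_le_add'.2 ht.2)]
    _ = _ := (setIntegral_indicator measurableSet_Iic).symm

/-- A convolution kernel `P` on `(0, T]` that is strongly measurable as an operator family and
dominated in norm by an integrable function `k`, so that `P` may be singular at `0`. The bound `k`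
is kept explicit because `r ↦ ‖P r‖` need not be measurable. -/
structure IsDominatedKernel (P : ℝ → W →L[ℝ] Y) (k : ℝ → ℝ) (T : ℝ) : Prop where
  aestronglyMeasurable : ∀ w, AEStronglyMeasurable (fun r => P r w) (volume.restrict (Ioc 0 T))
  norm_le : ∀ r ∈ Ioc 0 T, ‖P r‖ ≤ k r
  integrableOn : IntegrableOn k (Ioc 0 T)

namespace IsDominatedKernel

lemma of_norm_le_rpow {M κ γ : ℝ} (hγ : γ < 1)
    (hP : ∀ w, ContinuousOn (fun r => P r w) (Ioi 0))
    (hbound : ∀ r, 0 < r → ‖P r‖ ≤ M * Real.exp (κ * r) * r ^ (-γ)) :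
    IsDominatedKernel P (fun r => M * Real.exp (κ * r) * r ^ (-γ)) T where
  aestronglyMeasurable w :=
    ((hP w).mono Ioc_subset_Ioi_self).aestronglyMeasurable measurableSet_Ioc
  norm_le r hr := hbound r hr.1
  integrableOn :=
    ((intervalIntegral.intervalIntegrable_rpow' (neg_lt_neg hγ)).continuousOn_mul
      (by fun_prop)).1

lemma exp_smul (h : IsDominatedKernel P k T) (c : ℝ) :
    IsDominatedKernel (fun r => Real.exp (-c * r) • P r) (fun r => Real.exp (-c * r) • k r) T where
  aestronglyMeasurable w :=
    (by fun_prop : AEStronglyMeasurable (fun r => Real.exp (-c * r)) _).smul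
      (h.aestronglyMeasurable w)
  norm_le r hr := by
    rw [norm_smul, Real.norm_eq_abs, Real.abs_exp]
    exact mul_le_mul_of_nonneg_left (h.norm_le r hr) (Real.exp_pos _).le
  integrableOn :=
    h.integrableOn.continuousOn_mul_of_subset (K := Icc 0 T) (by fun_prop) isCompact_Icc
      measurableSet_Ioc Ioc_subset_Icc_self

lemma integrableOn_apply (h : IsDominatedKernel P k T) {s : Set ℝ} (hs : MeasurableSet s)
    (hsT : s ⊆ Ioc 0 T) (hg : AEStronglyMeasurable g (volume.restrict s))
    (hC : ∀ r ∈ s, ‖g r‖ ≤ C) : IntegrableOn (fun r => P r (g r)) s := by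
  refine ((h.integrableOn.mono_set hsT).mul_const C).mono' (aestronglyMeasurable_clm_apply_s4
    (fun w => (h.aestronglyMeasurable w).mono_measure (Measure.restrict_mono_set _ hsT)) hg) ?_
  filter_upwards [ae_restrict_mem hs] with r hr
  exact (P r).le_of_opNorm_le_of_le (h.norm_le r (hsT hr)) (hC r hr)

lemma intervalIntegrable_convolution (h : IsDominatedKernel P k T)
    (hg : ContinuousOn g (Icc t₀ (t₀ + T))) (ht : t ∈ Icc t₀ (t₀ + T)) :
    IntervalIntegrable (fun s => P (t - s) (g s)) volume t₀ t := by
  obtain ⟨C, hC⟩ := isCompact_Icc.exists_bound_of_continuousOn hg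
  have hmaps : MapsTo (fun r => t - r) (Ioc 0 (t - t₀)) (Icc t₀ (t₀ + T)) := fun r hr =>
    ⟨le_sub_comm.1 hr.2, (sub_le_self t hr.1.le).trans ht.2⟩
  have hr : IntervalIntegrable (fun r => P r (g (t - r))) volume 0 (t - t₀) := by
    rw [intervalIntegrable_iff_integrableOn_Ioc_of_le (sub_nonneg.2 ht.1)]
    exact h.integrableOn_apply (g := fun r => g (t - r)) measurableSet_Ioc
      (Ioc_subset_Ioc_right (sub_le_iff_le_add'.2 ht.2))
      ((hg.comp (by fun_prop) hmaps).aestronglyMeasurable measurableSet_Ioc)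
      fun r hr => hC _ (hmaps hr)
  simpa using (hr.comp_sub_left t).symm

lemma ae_norm_indicator_le (h : IsDominatedKernel P k T) (hC : ∀ s, ‖g s‖ ≤ C) (t₀ t : ℝ) :
    ∀ᵐ r ∂volume.restrict (Ioc 0 T),
      ‖(Iic (t - t₀)).indicator (fun r => P r (g (t - r))) r‖ ≤ k r * C := by
  filter_upwards [ae_restrict_mem measurableSet_Ioc] with r hr
  exact (norm_indicator_le_norm_self _ _).trans
    ((P r).le_of_opNorm_le_of_le (h.norm_le r hr) (hC _))

lemma setIntegral_nonneg (h : IsDominatedKernel P k T) : 0 ≤ ∫ r in Ioc 0 T, k r :=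
  MeasureTheory.setIntegral_nonneg measurableSet_Ioc fun r hr =>
    (norm_nonneg _).trans (h.norm_le r hr)

lemma norm_convolution_le (h : IsDominatedKernel P k T) (hC : ∀ s, ‖g s‖ ≤ C)
    (ht : t ∈ Icc t₀ (t₀ + T)) :
    ‖∫ s in t₀..t, P (t - s) (g s)‖ ≤ (∫ r in Ioc 0 T, k r) * C := by
  rw [intervalIntegral_convolution_eq_setIntegral P g ht, ← integral_mul_const]
  exact norm_integral_le_of_norm_le (h.integrableOn.mul_const C) (h.ae_norm_indicator_le hC t₀ t)

lemma continuousOn_convolution (h : IsDominatedKernel P k T) (hg : Continuous g)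
    (hC : ∀ s, ‖g s‖ ≤ C) (t₀ : ℝ) :
    ContinuousOn (fun t => ∫ s in t₀..t, P (t - s) (g s)) (Icc t₀ (t₀ + T)) := by
  refine ContinuousOn.congr (continuousOn_of_forall_continuousAt fun t _ => ?_) fun t ht =>
    intervalIntegral_convolution_eq_setIntegral P g ht
  refine continuousAt_of_dominated (.of_forall fun τ => ?_)
    (.of_forall fun τ => h.ae_norm_indicator_le hC t₀ τ) (h.integrableOn.mul_const C) ?_
  · exact (aestronglyMeasurable_clm_apply_s4 h.aestronglyMeasurable
      (by fun_prop : Continuous fun r => g (τ - r)).aestronglyMeasurable).indicator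
      measurableSet_Iic
  · -- As a function of `τ` the cut-off integrand jumps only at `t₀ + r`, and almost every `r`
    -- satisfies `t ≠ t₀ + r`.
    filter_upwards [ae_restrict_of_ae (volume.ae_ne (t - t₀))] with r hr
    have hcut : (fun τ => (Iic (τ - t₀)).indicator (fun r => P r (g (τ - r))) r) =
        (Ici (t₀ + r)).indicator fun τ => P r (g (τ - r)) := by
      ext τ
      simp only [indicator, mem_Iic, mem_Ici, le_sub_iff_add_le']
    rw [hcut]
    refine ContinuousOn.continuousAt_indicator (by fun_prop) ?_
    rw [frontier_Ici, mem_singleton_iff]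
    rintro rfl
    exact hr (by ring)

/-- Convolution with a dominated kernel, `v ↦ (t ↦ ∫ s in t₀..t, P (t - s) (v s))`, as an operator
on `C([t₀, t₀ + T], W)`; `IccExtend` turns `v` into a function on `ℝ`. -/
noncomputable def convolutionCLM (h : IsDominatedKernel P k T) (t₀ : ℝ) (hT : t₀ ≤ t₀ + T) :
    C(Icc t₀ (t₀ + T), W) →L[ℝ] C(Icc t₀ (t₀ + T), Y) :=
  LinearMap.mkContinuous
    { toFun := fun v => ⟨fun t => ∫ s in t₀..t, P (t - s) (IccExtend hT v s),
        (h.continuousOn_convolution v.continuous.Icc_extend' (fun _ => v.norm_coe_le_norm _)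
          t₀).domRestrict⟩
      map_add' := fun v w => by
        ext t
        simpa [IccExtend] using intervalIntegral.integral_add
          (h.intervalIntegrable_convolution v.continuous.Icc_extend'.continuousOn t.2)
          (h.intervalIntegrable_convolution w.continuous.Icc_extend'.continuousOn t.2)
      map_smul' := fun c v => by
        ext t
        simp [IccExtend] }
    (∫ r in Ioc 0 T, k r) fun v =>
      (ContinuousMap.norm_le _ (mul_nonneg h.setIntegral_nonneg (norm_nonneg v))).2 fun t =>
        h.norm_convolution_le (fun _ => v.norm_coe_le_norm _) t.2

lemma convolutionCLM_apply_eq (h : IsDominatedKernel P k T) (hT : t₀ ≤ t₀ + T)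
    {v : C(Icc t₀ (t₀ + T), W)} (hg : ∀ s : Icc t₀ (t₀ + T), g s = v s) (t : Icc t₀ (t₀ + T)) :
    h.convolutionCLM t₀ hT v t = ∫ s in t₀..t, P (t - s) (g s) := by
  refine intervalIntegral.integral_congr fun s hs => ?_
  rw [uIcc_of_le t.2.1] at hs
  have hsI : s ∈ Icc t₀ (t₀ + T) := ⟨hs.1, hs.2.trans t.2.2⟩
  simp only [IccExtend_of_mem hT v hsI, hg ⟨s, hsI⟩]

lemma norm_convolutionCLM_le (h : IsDominatedKernel P k T) (hT : t₀ ≤ t₀ + T) :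
    ‖h.convolutionCLM t₀ hT‖ ≤ ∫ r in Ioc 0 T, k r :=
  LinearMap.mkContinuous_norm_le _ h.setIntegral_nonneg _

end IsDominatedKernel

end Convolution

section Volterra

variable {Y W : Type*} [NormedAddCommGroup Y] [NormedSpace ℝ Y] [CompleteSpace Y]
  [NormedAddCommGroup W] [NormedSpace ℝ W] {P : ℝ → W →L[ℝ] Y} {k : ℝ → ℝ} {t₀ T : ℝ}

variable (Y) in
/-- Multiplication by `exp (c * t)` as an invertible operator on `C(s, Y)`. Conjugating with it
amounts to passing to a Bielecki weighted norm. -/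
noncomputable def expWeight (s : Set ℝ) [CompactSpace s] (c : ℝ) :
    (C(s, Y) →L[ℝ] C(s, Y))ˣ where
  val := pointwiseApply (fun t => Real.exp (c * t) • .id ℝ Y) fun y => by
    simp only [smul_apply, ContinuousLinearMap.id_apply]; fun_prop
  inv := pointwiseApply (fun t => Real.exp (-(c * t)) • .id ℝ Y) fun y => by
    simp only [smul_apply, ContinuousLinearMap.id_apply]; fun_prop
  val_inv := by ext v t; simp [smul_smul, ← Real.exp_add]
  inv_val := by ext v t; simp [smul_smul, ← Real.exp_add]

lemma expWeight_apply (s : Set ℝ) [CompactSpace s] (c : ℝ) (v : C(s, Y)) (t : s) :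
    (expWeight Y s c : C(s, Y) →L[ℝ] C(s, Y)) v t = Real.exp (c * t) • v t :=
  rfl

lemma expWeight_inv_apply (s : Set ℝ) [CompactSpace s] (c : ℝ) (v : C(s, Y)) (t : s) :
    (↑(expWeight Y s c)⁻¹ : C(s, Y) →L[ℝ] C(s, Y)) v t = Real.exp (-(c * t)) • v t :=
  rfl

/-- The Volterra operator `v ↦ (t ↦ ∫ s in t₀..t, P (t - s) (B s (v s)))` on
`C([t₀, t₀ + T], Y)`, for a strongly continuous family `B`. -/
noncomputable def volterraCLM (h : IsDominatedKernel P k T) (hT : t₀ ≤ t₀ + T)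
    (B : Icc t₀ (t₀ + T) → Y →L[ℝ] W) (hB : ∀ y, Continuous fun s => B s y) :
    C(Icc t₀ (t₀ + T), Y) →L[ℝ] C(Icc t₀ (t₀ + T), Y) :=
  h.convolutionCLM t₀ hT ∘L pointwiseApply B hB

variable {B : Icc t₀ (t₀ + T) → Y →L[ℝ] W}

lemma volterraCLM_apply (h : IsDominatedKernel P k T) (hT : t₀ ≤ t₀ + T)
    (hB : ∀ y, Continuous fun s => B s y) (v : C(Icc t₀ (t₀ + T), Y)) :
    volterraCLM h hT B hB v = h.convolutionCLM t₀ hT (pointwiseApply B hB v) :=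
  rfl

lemma expWeight_conj_volterraCLM (h : IsDominatedKernel P k T) (hT : t₀ ≤ t₀ + T)
    (hB : ∀ y, Continuous fun s => B s y) (c : ℝ) :
    ↑(expWeight Y (Icc t₀ (t₀ + T)) c)⁻¹ * volterraCLM h hT B hB *
        ↑(expWeight Y (Icc t₀ (t₀ + T)) c) =
      volterraCLM (h.exp_smul c) hT B hB := by
  ext v t
  simp only [mul_apply_eq_comp, expWeight_inv_apply, volterraCLM_apply]
  rw [h.convolutionCLM_apply_eq hT
      (g := fun s => Real.exp (c * s) • IccExtend hT (pointwiseApply B hB v) s) fun s => by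
        simp [expWeight_apply],
    (h.exp_smul c).convolutionCLM_apply_eq hT
      (g := IccExtend hT (pointwiseApply B hB v)) fun s => by simp,
    ← intervalIntegral.integral_smul]
  refine intervalIntegral.integral_congr fun s _ => ?_
  simp only [map_smul, smul_apply, smul_smul, ← Real.exp_add]
  congr 2
  ring

lemma isUnit_one_sub_volterraCLM (h : IsDominatedKernel P k T) (hT : t₀ ≤ t₀ + T)
    (hB : ∀ y, Continuous fun s => B s y) : IsUnit (1 - volterraCLM h hT B hB) := by
  have hlim : Tendsto (fun c : ℝ => (∫ r in Ioc 0 T, Real.exp (-c * r) • k r) *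
      ‖pointwiseApply B hB‖) atTop (𝓝 0) := by
    simpa using (tendsto_setIntegral_exp_neg_mul_smul_atTop measurableSet_Ioc
      Ioc_subset_Ioi_self h.integrableOn).mul_const ‖pointwiseApply B hB‖
  obtain ⟨c, hc⟩ := (hlim.eventually_lt_const one_pos).exists
  refine isUnit_one_sub_of_norm_conj_lt_one
    (R := C(Icc t₀ (t₀ + T), Y) →L[ℝ] C(Icc t₀ (t₀ + T), Y)) (expWeight Y (Icc t₀ (t₀ + T)) c) ?_
  rw [expWeight_conj_volterraCLM]
  exact ((ContinuousLinearMap.opNorm_comp_le _ _).trans (mul_le_mul_of_nonneg_right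
    ((h.exp_smul c).norm_convolutionCLM_le hT) (norm_nonneg _))).trans_lt hc

lemma eq_add_volterraCLM_iff {A : ℝ → Y →L[ℝ] W} (h : IsDominatedKernel P k T)
    (hT : t₀ ≤ t₀ + T) (hA : ∀ y, Continuous fun s : Icc t₀ (t₀ + T) => A s y)
    {u v : C(Icc t₀ (t₀ + T), Y)} {f z : ℝ → Y} (hf : ∀ t : Icc t₀ (t₀ + T), f t = u t)
    (hz : ∀ t : Icc t₀ (t₀ + T), z t = v t) :
    v = u + volterraCLM h hT (fun s => A s) hA v ↔
      ∀ t ∈ Icc t₀ (t₀ + T), z t = f t + ∫ s in t₀..t, P (t - s) (A s (z s)) := by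
  rw [ContinuousMap.ext_iff, Subtype.forall]
  refine forall₂_congr fun t ht => ?_
  rw [ContinuousMap.add_apply, volterraCLM_apply,
    h.convolutionCLM_apply_eq hT (g := fun s => A s (z s)) (fun s => by simp [hz]),
    ← hf ⟨t, ht⟩, ← hz ⟨t, ht⟩]

end Volterra

theorem linear_nonautonomous_solution_operator_general
    {Y W : Type*} [NormedAddCommGroup Y] [NormedSpace ℝ Y] [CompleteSpace Y]
    [NormedAddCommGroup W] [NormedSpace ℝ W] {t₀ T : ℝ} (hT : 0 ≤ T)
    {S : ℝ → Y →L[ℝ] Y} (hS : ∀ y, ContinuousOn (fun t => S t y) (Icc 0 T))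
    {T' : ℝ → W →L[ℝ] Y} {k : ℝ → ℝ} (hT' : IsDominatedKernel T' k T)
    {A : ℝ → Y →L[ℝ] W} (hA : ∀ y, ContinuousOn (fun s => A s y) (Icc t₀ (t₀ + T))) :
    ∃ Jop : ℝ → Y →L[ℝ] Y, ∀ z0 : Y,
      (ContinuousOn (fun t => Jop t z0) (Icc t₀ (t₀ + T)) ∧
        (∀ t ∈ Icc t₀ (t₀ + T),
          IntervalIntegrable (fun s => T' (t - s) (A s (Jop s z0))) volume t₀ t) ∧
        ∀ t ∈ Icc t₀ (t₀ + T),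
          Jop t z0 = S (t - t₀) z0 + ∫ s in t₀..t, T' (t - s) (A s (Jop s z0))) ∧
      ∀ z : ℝ → Y, ContinuousOn z (Icc t₀ (t₀ + T)) →
        (∀ t ∈ Icc t₀ (t₀ + T),
          z t = S (t - t₀) z0 + ∫ s in t₀..t, T' (t - s) (A s (z s))) →
        EqOn z (fun t => Jop t z0) (Icc t₀ (t₀ + T)) := by
  have hI : t₀ ≤ t₀ + T := le_add_of_nonneg_right hT
  have hA' : ∀ y, Continuous fun s : Icc t₀ (t₀ + T) => A s y := fun y => (hA y).domRestrict
  have hS' : ∀ y, Continuous fun t : Icc t₀ (t₀ + T) => S (t - t₀) y := fun y =>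
    (hS y).comp_continuous (by fun_prop) fun t =>
      ⟨sub_nonneg.2 t.2.1, sub_le_iff_le_add'.2 t.2.2⟩
  obtain ⟨R, hR⟩ := exists_clm_forall_eq_add_iff
    (pointwiseApply _ hS' ∘L ContinuousLinearMap.const ℝ (Icc t₀ (t₀ + T)))
    (isUnit_one_sub_volterraCLM hT' hI hA')
  have mild_iff {z0 : Y} {v : C(Icc t₀ (t₀ + T), Y)} {z : ℝ → Y}
      (hz : ∀ t : Icc t₀ (t₀ + T), z t = v t) :
      (∀ t ∈ Icc t₀ (t₀ + T),
        z t = S (t - t₀) z0 + ∫ s in t₀..t, T' (t - s) (A s (z s))) ↔ v = R z0 :=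
    (eq_add_volterraCLM_iff hT' hI hA' (fun _ => rfl) hz).symm.trans (hR z0 v)
  refine ⟨fun t => ContinuousMap.evalCLM ℝ (projIcc t₀ (t₀ + T) hI t) ∘L R, fun z0 => ?_⟩
  have hcont : Continuous fun t => R z0 (projIcc t₀ (t₀ + T) hI t) :=
    (R z0).continuous.comp continuous_projIcc
  refine ⟨⟨hcont.continuousOn, fun t ht => ?_, ?_⟩, fun z hz heq t ht => ?_⟩
  · refine hT'.intervalIntegrable_convolution (continuousOn_iff_continuous_domRestrict.2 ?_) ht
    exact continuous_clm_apply_of_forall_continuous hA' (hcont.comp continuous_subtype_val)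
  · exact (mild_iff fun t => by simp).2 rfl
  · have hv := (mild_iff (v := ⟨_, hz.domRestrict⟩) fun _ => rfl).1 heq
    simpa [projIcc_of_mem hI ht] using DFunLike.congr_fun hv ⟨t, ht⟩

/-- Consider the non-autonomous linear problem
`z' = Lz + A(t)z`, `z(t₀) = z⁰`, where `A : [t₀, t₀+T] → L(Y;W)` is continuous.  Then for
every `z⁰ ∈ Y` there exists a unique continuous `z : [t₀, t₀+T] → Y` satisfying
`z t = S (t−t₀) z⁰ + ∫_{t₀}^t T' (t−s) (A s (z s)) ds` on `[t₀, t₀+T]`; moreover, for each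
`t ∈ [t₀, t₀+T]` the solution operator `J(t,t₀) : z⁰ ↦ z(t)` is a bounded linear operator
on `Y` (here realized as a family `Jop : ℝ → (Y →L[ℝ] Y)`). -/
theorem linear_nonautonomous_solution_operator
    {Y W : Type*} [NormedAddCommGroup Y] [NormedSpace ℝ Y] [CompleteSpace Y]
    [NormedAddCommGroup W] [NormedSpace ℝ W] [CompleteSpace W]
    (J : Y →L[ℝ] W) (hJ : Function.Injective J)
    (S : ℝ → Y →L[ℝ] Y)
    (hS0 : S 0 = ContinuousLinearMap.id ℝ Y)
    (hS_semigroup : ∀ s t : ℝ, 0 ≤ s → 0 ≤ t → S (t + s) = (S t).comp (S s))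
    (hS_cont : ∀ y : Y, ContinuousOn (fun t => S t y) (Set.Ici (0 : ℝ)))
    (M₁ κ₁ : ℝ) (hM₁ : 0 < M₁) (hκ₁ : 0 < κ₁)
    (hS_bound : ∀ t : ℝ, 0 ≤ t → ‖S t‖ ≤ M₁ * Real.exp (κ₁ * t))
    (T' : ℝ → W →L[ℝ] Y)
    (hT'J : ∀ t : ℝ, 0 < t → (T' t).comp J = S t)
    (hT'S : ∀ s t : ℝ, 0 < s → 0 < t → T' (t + s) = (S t).comp (T' s))
    (M₂ κ₂ γ : ℝ) (hM₂ : 0 < M₂) (hκ₂ : 0 < κ₂) (hγ0 : 0 ≤ γ) (hγ1 : γ < 1)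
    (hT'_bound : ∀ t : ℝ, 0 < t → ‖T' t‖ ≤ M₂ * Real.exp (κ₂ * t) * t ^ (-γ))
    (hT'_cont : ∀ w : W, ContinuousOn (fun t => T' t w) (Set.Ioi (0 : ℝ)))
    (t₀ T : ℝ) (hT : 0 < T)
    (A : ℝ → Y →L[ℝ] W)
    (hA : ContinuousOn A (Set.Icc t₀ (t₀ + T))) :
    ∃ Jop : ℝ → Y →L[ℝ] Y, ∀ z0 : Y,
      (ContinuousOn (fun t => Jop t z0) (Set.Icc t₀ (t₀ + T)) ∧
        (∀ t ∈ Set.Icc t₀ (t₀ + T),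
          IntervalIntegrable (fun s => T' (t - s) (A s (Jop s z0)))
            MeasureTheory.volume t₀ t) ∧
        ∀ t ∈ Set.Icc t₀ (t₀ + T),
          Jop t z0 = S (t - t₀) z0 + ∫ s in t₀..t, T' (t - s) (A s (Jop s z0))) ∧
      ∀ z : ℝ → Y,
        ContinuousOn z (Set.Icc t₀ (t₀ + T)) →
        (∀ t ∈ Set.Icc t₀ (t₀ + T),
          IntervalIntegrable (fun s => T' (t - s) (A s (z s))) MeasureTheory.volume t₀ t) →
        (∀ t ∈ Set.Icc t₀ (t₀ + T),
          z t = S (t - t₀) z0 + ∫ s in t₀..t, T' (t - s) (A s (z s))) →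
        Set.EqOn z (fun t => Jop t z0) (Set.Icc t₀ (t₀ + T)) := by
  obtain ⟨Jop, hJop⟩ := linear_nonautonomous_solution_operator_general hT.le
    (fun y => (hS_cont y).mono Icc_subset_Ici_self)
    (IsDominatedKernel.of_norm_le_rpow hγ1 hT'_cont hT'_bound)
    (fun y => hA.clm_apply continuousOn_const)
  exact ⟨Jop, fun z0 => ⟨(hJop z0).1, fun z hz _ => (hJop z0).2 z hz⟩⟩
end

section
/- Let γ ∈ [0,1). For every ε > 0 and every κ > 0 there exists α ≥ κ such that for all real t₀ ≤ t one has ∫_{t₀}^t (t − s)^{−γ} e^{α(s − t₀)} ds ≤ ε e^{α(t − t₀)}. -/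
/-!
Substituting `u = t - s` turns the integral into `e^{α(t-t₀)} ∫_0^{t-t₀} u^{-γ} e^{-αu} du`. The
last factor is at most the same integral over `(0, ∞)`, namely `α^{γ-1} Γ(1-γ)`, which does not
depend on `t₀` and `t` and tends to `0` as `α → ∞` because `γ < 1`.
-/

open Filter MeasureTheory Set

theorem integral_comp_sub_mul_exp (k : ℝ → ℝ) (α t₀ t : ℝ) :
    (∫ s in t₀..t, k (t - s) * Real.exp (α * (s - t₀))) =
      (∫ u in 0..(t - t₀), k u * Real.exp (-(α * u))) * Real.exp (α * (t - t₀)) := by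
  have integrand_eq (s : ℝ) : k (t - s) * Real.exp (α * (s - t₀)) =
      k (t - s) * Real.exp (-(α * (t - s))) * Real.exp (α * (t - t₀)) := by
    rw [mul_assoc, ← Real.exp_add]
    ring_nf
  simp_rw [integrand_eq, intervalIntegral.integral_mul_const]
  rw [intervalIntegral.integral_comp_sub_left (fun u ↦ k u * Real.exp (-(α * u))), sub_self]

theorem intervalIntegral_le_integral_Ioi {f : ℝ → ℝ} {a b : ℝ} (hab : a ≤ b)
    (hf : IntegrableOn f (Ioi a)) (hf_nonneg : ∀ x ∈ Ioi a, 0 ≤ f x) :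
    (∫ x in a..b, f x) ≤ ∫ x in Ioi a, f x := by
  rw [intervalIntegral.integral_of_le hab]
  exact setIntegral_mono_set hf (ae_restrict_of_forall_mem measurableSet_Ioi hf_nonneg)
    Ioc_subset_Ioi_self.eventuallyLE

theorem integral_comp_sub_mul_exp_le {k : ℝ → ℝ} {α t₀ t : ℝ} (ht : t₀ ≤ t)
    (hk : IntegrableOn (fun u ↦ k u * Real.exp (-(α * u))) (Ioi 0))
    (hk_nonneg : ∀ u ∈ Ioi 0, 0 ≤ k u) :
    (∫ s in t₀..t, k (t - s) * Real.exp (α * (s - t₀))) ≤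
      (∫ u in Ioi 0, k u * Real.exp (-(α * u))) * Real.exp (α * (t - t₀)) := by
  rw [integral_comp_sub_mul_exp]
  gcongr
  exact intervalIntegral_le_integral_Ioi (sub_nonneg.2 ht) hk fun u hu ↦
    mul_nonneg (hk_nonneg u hu) (Real.exp_nonneg _)

theorem integral_rpow_mul_exp_le_Gamma {γ α t₀ t : ℝ} (hγ : γ < 1) (hα : 0 < α) (ht : t₀ ≤ t) :
    (∫ s in t₀..t, (t - s) ^ (-γ) * Real.exp (α * (s - t₀))) ≤
      α ^ (-(1 - γ)) * Real.Gamma (1 - γ) * Real.exp (α * (t - t₀)) := by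
  have integrable : IntegrableOn (fun u : ℝ ↦ u ^ (-γ) * Real.exp (-(α * u))) (Ioi 0) := by
    simpa only [Real.rpow_one, neg_mul] using
      integrableOn_rpow_mul_exp_neg_mul_rpow (neg_lt_neg hγ) one_pos hα
  have integral_eq : (∫ u in Ioi (0 : ℝ), u ^ (-γ) * Real.exp (-(α * u))) =
      α ^ (-(1 - γ)) * Real.Gamma (1 - γ) := by
    have h := Real.integral_rpow_mul_exp_neg_mul_Ioi (sub_pos.2 hγ) hα
    rwa [sub_sub_cancel_left, one_div, Real.inv_rpow hα.le, ← Real.rpow_neg hα.le] at h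
  rw [← integral_eq]
  exact integral_comp_sub_mul_exp_le ht integrable fun u hu ↦ Real.rpow_nonneg (le_of_lt hu) _

theorem exists_exponent_integral_rpow_exp_le_general {γ ε : ℝ} (hγ : γ < 1) (hε : 0 < ε) :
    ∀ᶠ α : ℝ in atTop, ∀ t₀ t : ℝ, t₀ ≤ t →
      (∫ s in t₀..t, (t - s) ^ (-γ) * Real.exp (α * (s - t₀))) ≤
        ε * Real.exp (α * (t - t₀)) := by
  have constant_tendsto_zero :
      Tendsto (fun α : ℝ ↦ α ^ (-(1 - γ)) * Real.Gamma (1 - γ)) atTop (nhds 0) := by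
    simpa only [zero_mul] using
      (tendsto_rpow_neg_atTop (sub_pos.2 hγ)).mul_const (Real.Gamma (1 - γ))
  filter_upwards [constant_tendsto_zero.eventually_le_const hε, eventually_gt_atTop 0]
    with α constant_le hα t₀ t ht
  exact (integral_rpow_mul_exp_le_Gamma hγ hα ht).trans (by gcongr)

/-- Let `γ ∈ [0,1)`.  For every `ε > 0` and every `κ > 0` there exists
`α ≥ κ` such that for all real `t₀ ≤ t`,
`∫_{t₀}^t (t − s)^{−γ} e^{α(s−t₀)} ds ≤ ε e^{α(t−t₀)}`. -/
theorem exists_exponent_integral_rpow_exp_le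
    (γ : ℝ) (hγ0 : 0 ≤ γ) (hγ1 : γ < 1) :
    ∀ ε : ℝ, 0 < ε → ∀ κ : ℝ, 0 < κ → ∃ α : ℝ, κ ≤ α ∧
      ∀ t₀ t : ℝ, t₀ ≤ t →
        (∫ s in t₀..t, (t - s) ^ (-γ) * Real.exp (α * (s - t₀))) ≤
          ε * Real.exp (α * (t - t₀)) := by
  intro ε hε κ _
  exact ((eventually_ge_atTop κ).and
    (exists_exponent_integral_rpow_exp_le_general hγ1 hε)).exists
end
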